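/- arXiv:math/0205064 — 4 statements merged into one kernel-verified Lean document; each statement's English description precedes it below -/
import Mathlib

section
/- Let Ω ⊆ ℂ be open, let f : ℂ → ℂ be analytic (complex differentiable) on Ω, and let z1, z2 ∈ Ω with z1 ≠ z2. Let z ∈ Ω and suppose there exists r > |(z−z1)(z−z2)| such that |(w−z1)(w−z2)| ≥ r for every w ∈ ℂ \ Ω. Then the two-point Taylor series of f at z1, z2 converges to f at z: the partial sums S_N(z) = Σ_{n=0}^{N−1} [a_n(z1,z2)(z−z1) + a_n(z2,z1)(z−z2)]·((z−z1)(z−z2))^n tend to f(z) as N → ∞. -/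
/-- The two-point Taylor coefficient `a_n(z1, z2)` of `f` at the points `z1, z2`:
`a_0(z1,z2) = f(z2)/(z2−z1)` and, for `n ≥ 1`,
`a_n(z1,z2) = Σ_{k=0}^{n} ((n+k−1)!/(k!(n−k)!)) ·
  ((−1)^{n+1}·n·f^{(n−k)}(z2) + (−1)^k·k·f^{(n−k)}(z1)) / (n!·(z1−z2)^{n+k+1})`. -/
noncomputable def twoPointCoeff (f : ℂ → ℂ) (z1 z2 : ℂ) (n : ℕ) : ℂ :=
  if n = 0 then f z2 / (z2 - z1)
  else ∑ k ∈ Finset.range (n + 1),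
    ((Nat.factorial (n + k - 1) : ℂ) / ((Nat.factorial k : ℂ) * (Nat.factorial (n - k) : ℂ))) *
      (((-1 : ℂ) ^ (n + 1) * (n : ℂ) * iteratedDeriv (n - k) f z2
          + (-1 : ℂ) ^ k * (k : ℂ) * iteratedDeriv (n - k) f z1)
        / ((Nat.factorial n : ℂ) * (z1 - z2) ^ (n + k + 1)))

section TP

open Polynomial Filter Topology

noncomputable def tpW (x : ℂ) (q : ℕ) : PowerSeries ℂ :=
  PowerSeries.mk fun k => (-1 : ℂ) ^ k * ((q + k - 1).choose k : ℂ) / x ^ (q + k)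

lemma tpW_zero (x : ℂ) : tpW x 0 = 1 := by
  ext k
  rcases k with _ | k
  · simp [tpW]
  · simp [tpW, PowerSeries.coeff_one]

lemma tpW_succ (x : ℂ) (hx : x ≠ 0) (q : ℕ) :
    (PowerSeries.X + PowerSeries.C x) * tpW x (q + 1) = tpW x q := by
  ext k
  rw [add_mul, map_add, PowerSeries.coeff_C_mul]
  rcases k with _ | k
  · simp [tpW]
    field_simp
    ring
  · rw [PowerSeries.coeff_succ_X_mul]
    simp only [tpW, PowerSeries.coeff_mk]
    have e1 : q + 1 + k - 1 = q + k := by omega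
    have e2 : q + 1 + (k + 1) - 1 = q + k + 1 := by omega
    have e3 : q + (k + 1) - 1 = q + k := by omega
    rw [e1, e2, e3, Nat.choose_succ_succ]
    push_cast
    field_simp
    ring

noncomputable def tpL (z1 z2 : ℂ) (p q : ℕ) : ℂ[X] →ₗ[ℂ] ℂ where
  toFun P := PowerSeries.coeff p (PowerSeries.X * (((taylor z1 P : ℂ[X]) : PowerSeries ℂ) * tpW (z1 - z2) q))
    + PowerSeries.coeff q (PowerSeries.X * (((taylor z2 P : ℂ[X]) : PowerSeries ℂ) * tpW (z2 - z1) p))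
  map_add' P Q := by
    simp only [map_add, Polynomial.coe_add, add_mul, mul_add]
    ring
  map_smul' c P := by
    simp only [map_smul, Polynomial.coe_smul, smul_mul_assoc, mul_smul_comm, RingHom.id_apply, smul_eq_mul]
    ring

lemma tpL_apply (z1 z2 : ℂ) (p q : ℕ) (P : ℂ[X]) : tpL z1 z2 p q P =
   PowerSeries.coeff p (PowerSeries.X * (((taylor z1 P : ℂ[X]) : PowerSeries ℂ) * tpW (z1 - z2) q))
    + PowerSeries.coeff q (PowerSeries.X * (((taylor z2 P : ℂ[X]) : PowerSeries ℂ) * tpW (z2 - z1) p)) := rfl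

lemma tpL_swap (z1 z2 : ℂ) (p q : ℕ) (P : ℂ[X]) : tpL z1 z2 p q P = tpL z2 z1 q p P := by
  rw [tpL_apply, tpL_apply, add_comm]

lemma tpL_left (z1 z2 : ℂ) (h : z1 ≠ z2) (p q : ℕ) (P : ℂ[X]) :
    tpL z1 z2 (p + 1) q ((X - C z1) * P) = tpL z1 z2 p q P := by
  rw [tpL_apply, tpL_apply, ← tpW_succ (z2 - z1) (sub_ne_zero.2 h.symm) p]
  rw [PowerSeries.coeff_succ_X_mul]
  simp only [taylor_mul, map_sub, taylor_X, taylor_C, Polynomial.coe_mul, Polynomial.coe_add, Polynomial.coe_sub, Polynomial.coe_X, Polynomial.coe_C]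
  congr 2 <;> ring

lemma tpL_right (z1 z2 : ℂ) (h : z1 ≠ z2) (p q : ℕ) (P : ℂ[X]) :
    tpL z1 z2 p (q + 1) ((X - C z2) * P) = tpL z1 z2 p q P := by
  rw [tpL_swap, tpL_left _ _ h.symm, tpL_swap]

lemma tpL_one (z1 z2 : ℂ) (h : z1 ≠ z2) : ∀ p q : ℕ,
    tpL z1 z2 p q 1 = if p + q = 1 then 1 else 0 := by
  intro p
  induction p with
  | zero => intro q; simp [tpL_apply, tpW_zero, PowerSeries.coeff_X]
  | succ p ihp =>
    intro q
    induction q with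
    | zero => simp [tpL_apply, tpW_zero, PowerSeries.coeff_X]
    | succ q ihq =>
      have h1 := tpL_left z1 z2 h p (q + 1) 1
      have h2 := tpL_right z1 z2 h (p + 1) q 1
      have h3 : (z2 - z1) • (1 : ℂ[X]) = (X - C z1) * 1 - (X - C z2) * 1 := by
        rw [Polynomial.smul_eq_C_mul, map_sub]; ring
      have h4 := congrArg (tpL z1 z2 (p + 1) (q + 1)) h3
      rw [map_sub, map_smul, h1, h2, ihp, ihq, show p + (q + 1) = p + 1 + q by ring, sub_self,
        smul_eq_mul] at h4
      rw [if_neg (by omega)]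
      exact (mul_eq_zero.1 h4).resolve_left (sub_ne_zero.2 h.symm)

lemma tpL_pow (z1 z2 : ℂ) (h : z1 ≠ z2) (m p q : ℕ) (P : ℂ[X]) :
    tpL z1 z2 (p + m) (q + m) (P * ((X - C z1) * (X - C z2)) ^ m) = tpL z1 z2 p q P := by
  induction m with
  | zero => simp
  | succ m ih =>
    rw [← ih, ← add_assoc, ← add_assoc, ← tpL_right z1 z2 h (p + m) (q + m), ← tpL_left z1 z2 h (p + m)]
    congr 1
    ring

noncomputable def tpP (z1 z2 : ℂ) (a b : ℕ → ℂ) (n : ℕ) : ℂ[X] :=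
  ∑ m ∈ Finset.range (n + 1),
    (a m • (X - C z1) + b m • (X - C z2)) * ((X - C z1) * (X - C z2)) ^ m

lemma tpL_tpP (z1 z2 : ℂ) (h : z1 ≠ z2) (a b : ℕ → ℂ) (n : ℕ) :
    tpL z1 z2 n (n + 1) (tpP z1 z2 a b n) = a n * (z2 - z1) := by
  rw [tpP, map_sum, Finset.sum_eq_single n]
  · have := tpL_pow z1 z2 h n 0 1 (a n • (X - C z1) + b n • (X - C z2))
    rw [zero_add, add_comm 1 n] at this
    rw [this, map_add, map_smul, map_smul]
    have h2 := tpL_right z1 z2 h 0 0 1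
    rw [mul_one, tpL_one z1 z2 h] at h2
    have h1 : tpL z1 z2 0 1 (X - C z1) = z2 - z1 := by
      simp [tpL_apply, tpW_zero, PowerSeries.coeff_X, PowerSeries.coeff_succ_X_mul]
    rw [h1, h2]
    simp
  · intro m hm hmn
    have hm' : m < n := by have := Finset.mem_range.1 hm; omega
    obtain ⟨k, rfl⟩ := Nat.exists_eq_add_of_lt hm'
    have := tpL_pow z1 z2 h m (k + 1) (k + 2) (a m • (X - C z1) + b m • (X - C z2))
    rw [show m + k + 1 = k + 1 + m by ring, show k + 1 + m + 1 = k + 2 + m by ring, this, map_add, map_smul, map_smul]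
    have h2 := tpL_right z1 z2 h (k + 1) (k + 1) 1
    have h1 := tpL_left z1 z2 h k (k + 2) 1
    rw [mul_one, tpL_one z1 z2 h, if_neg (by omega)] at h1 h2
    rw [h1, h2]
    simp
  · simp
lemma tp_coeff_eq (f : ℂ → ℂ) (z1 z2 : ℂ) (h : z1 ≠ z2) (n : ℕ) (P : ℂ[X])
    (h1 : ∀ i ≤ n, iteratedDeriv i f z1 = (i.factorial : ℂ) * (taylor z1 P).coeff i)
    (h2 : ∀ i ≤ n, iteratedDeriv i f z2 = (i.factorial : ℂ) * (taylor z2 P).coeff i) :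
    twoPointCoeff f z1 z2 n * (z2 - z1) = tpL z1 z2 n (n + 1) P := by
  have hd : z1 - z2 ≠ 0 := sub_ne_zero.2 h
  have hd' : z2 - z1 ≠ 0 := sub_ne_zero.2 h.symm
  rcases n with _ | n
  · have := h2 0 le_rfl
    simp at this
    rw [tpL_apply, PowerSeries.coeff_succ_X_mul]
    simp [twoPointCoeff, tpW_zero, this, hd']
  rw [twoPointCoeff, if_neg (by omega), tpL_apply, PowerSeries.coeff_succ_X_mul,
    PowerSeries.coeff_succ_X_mul, mul_comm (_ : PowerSeries ℂ) (tpW _ _),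
    mul_comm (_ : PowerSeries ℂ) (tpW _ _), PowerSeries.coeff_mul, PowerSeries.coeff_mul,
    Finset.Nat.sum_antidiagonal_eq_sum_range_succ_mk,
    Finset.Nat.sum_antidiagonal_eq_sum_range_succ_mk]
  simp only [Polynomial.coeff_coe, tpW, PowerSeries.coeff_mk]
  rw [Finset.sum_mul]
  have key : ∀ k ∈ Finset.range (n + 1 + 1),
      (((n + 1 + k - 1).factorial : ℂ) / ((k.factorial : ℂ) * ((n + 1 - k).factorial : ℂ))) *
      (((-1 : ℂ) ^ (n + 1 + 1) * ((n + 1 : ℕ) : ℂ) * iteratedDeriv (n + 1 - k) f z2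
          + (-1 : ℂ) ^ k * (k : ℂ) * iteratedDeriv (n + 1 - k) f z1)
        / (((n + 1).factorial : ℂ) * (z1 - z2) ^ (n + 1 + k + 1))) * (z2 - z1) =
      (-1 : ℂ) ^ k * ((n + 1 + k - 1).choose k : ℂ) / (z2 - z1) ^ (n + 1 + k) *
        (taylor z2 P).coeff (n + 1 - k) +
      (k : ℂ) * ((-1) ^ (k + 1) * (n + k).factorial / (k.factorial * (n + 1).factorial) /
        (z1 - z2) ^ (n + 1 + k) * (taylor z1 P).coeff (n + 1 - k)) := by
    intro k hk
    have hk' : k ≤ n + 1 := by have := Finset.mem_range.1 hk; omega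
    rw [h1 _ (by omega), h2 _ (by omega), show n + 1 + k - 1 = n + k by omega,
      Nat.cast_choose ℂ (show k ≤ n + k by omega), Nat.add_sub_cancel,
      show z2 - z1 = - (z1 - z2) by ring, neg_pow (z1 - z2) (n + 1 + k), Nat.factorial_succ n]
    have f1 : (k.factorial : ℂ) ≠ 0 := by exact_mod_cast k.factorial_ne_zero
    have f2 : (n.factorial : ℂ) ≠ 0 := by exact_mod_cast n.factorial_ne_zero
    have f3 : ((n + 1 - k).factorial : ℂ) ≠ 0 := by exact_mod_cast (n + 1 - k).factorial_ne_zero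
    have f4 : ((n : ℂ) + 1) ≠ 0 := by exact_mod_cast n.succ_ne_zero
    have hs : (-1 : ℂ) ^ k * (-1) ^ k = 1 := by rw [← mul_pow]; simp
    have hn : (-1 : ℂ) ^ n * (-1) ^ n = 1 := by rw [← mul_pow]; simp
    have e : (-1 : ℂ) ^ k / ((-1) ^ (n + 1 + k) * (z1 - z2) ^ (n + 1 + k)) =
        (-1) ^ (n + 1) / (z1 - z2) ^ (n + 1 + k) := by
      field_simp
      simp only [pow_add, pow_one]
      linear_combination (-1 : ℂ) * (-1) ^ k * hn
    rw [mul_div_right_comm, e]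
    push_cast
    field_simp
    ring
  rw [Finset.sum_congr rfl key, Finset.sum_add_distrib, add_comm]
  congr 1
  rw [Finset.sum_range_succ']
  simp only [Nat.cast_zero, zero_mul, add_zero]
  refine Finset.sum_congr rfl fun k hk => ?_
  rw [show n + 1 + 1 + k - 1 = n + 1 + k by omega, show n + 1 - (k + 1) = n - k by omega,
    Nat.cast_choose ℂ (show k ≤ n + 1 + k by omega), Nat.add_sub_cancel, Nat.factorial_succ k,
    show n + (k + 1) = n + 1 + k by ring, show n + 1 + (k + 1) = n + 1 + 1 + k by ring]
  have f4 : ((k : ℂ) + 1) ≠ 0 := by exact_mod_cast k.succ_ne_zero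
  have f1 : (k.factorial : ℂ) ≠ 0 := by exact_mod_cast k.factorial_ne_zero
  have f2 : ((n + 1).factorial : ℂ) ≠ 0 := by exact_mod_cast (n + 1).factorial_ne_zero
  push_cast
  field_simp
  ring

lemma tp_even (v0 : ℂ) (r : ℝ) (G : ℂ → ℂ) (hG : ∀ s, G (-s) = G s)
    (hd : DifferentiableOn ℂ G {s | ‖s ^ 2 - v0‖ < r}) :
    ∃ H : ℂ → ℂ, DifferentiableOn ℂ H (Metric.ball v0 r) ∧ ∀ s, G s = H (s ^ 2) := by
  have hopen : IsOpen {s : ℂ | ‖s ^ 2 - v0‖ < r} := isOpen_lt (by fun_prop) (by fun_prop)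
  have hsq : ∀ v : ℂ, (v ^ (1 / 2 : ℂ)) ^ 2 = v := fun v => by
    rw [← Complex.cpow_nat_mul]; norm_num
  have hGsq : ∀ a b : ℂ, a ^ 2 = b ^ 2 → G a = G b := by
    intro a b hab
    rcases sq_eq_sq_iff_eq_or_eq_neg.1 hab with rfl | rfl
    · rfl
    · exact hG b
  have hcomp : ∀ (s : ℂ → ℂ) (v : ℂ), (∀ v, s v ^ 2 = v) → v ∈ Metric.ball v0 r →
      DifferentiableAt ℂ G (s v) := by
    intro s v hs hv
    refine hd.differentiableAt (hopen.mem_nhds ?_)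
    simpa [hs, ← dist_eq_norm] using hv
  refine ⟨fun v => G (v ^ (1 / 2 : ℂ)), ?_, fun s => hGsq _ _ (hsq _).symm⟩
  have hne : ∀ v ∈ Metric.ball v0 r, v ≠ 0 →
      DifferentiableAt ℂ (fun v => G (v ^ (1 / 2 : ℂ))) v := by
    intro v hv hv0
    by_cases hslit : v ∈ Complex.slitPlane
    · have h1 := hcomp (fun v => v ^ (1 / 2 : ℂ)) v hsq hv
      exact DifferentiableAt.comp v h1 (differentiableAt_id.cpow_const hslit)
    · have hs : ∀ v : ℂ, (Complex.I * (-v) ^ (1 / 2 : ℂ)) ^ 2 = v := fun v => by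
        rw [mul_pow, hsq]; simp
      have heq : (fun v => G (v ^ (1 / 2 : ℂ))) =
          fun v => G (Complex.I * (-v) ^ (1 / 2 : ℂ)) := by
        funext v
        exact hGsq _ _ (by rw [hs, hsq])
      have hneg : -v ∈ Complex.slitPlane := by
        rw [Complex.mem_slitPlane_iff] at hslit ⊢
        push Not at hslit
        left
        have : v.re ≠ 0 := fun h => hv0 (Complex.ext h hslit.2)
        have := lt_of_le_of_ne hslit.1 this
        simpa using this
      rw [heq]
      have h1 := hcomp (fun v => Complex.I * (-v) ^ (1 / 2 : ℂ)) v hs hv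
      exact DifferentiableAt.comp (f := fun v : ℂ => Complex.I * (-v) ^ (1 / 2 : ℂ)) v h1
        ((differentiableAt_id.neg.cpow_const hneg).const_mul _)
  by_cases h0 : (0 : ℂ) ∈ Metric.ball v0 r
  · rw [← Complex.differentiableOn_compl_singleton_and_continuousAt_iff
      (Metric.isOpen_ball.mem_nhds h0)]
    refine ⟨fun v hv => (hne v hv.1 hv.2).differentiableWithinAt, ?_⟩
    have h1 := hcomp (fun v => v ^ (1 / 2 : ℂ)) 0 hsq h0
    exact ContinuousAt.comp (f := fun v : ℂ => v ^ (1 / 2 : ℂ)) h1.continuousAt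
      (Complex.continuousAt_cpow_const_of_re_pos (by simp) (by norm_num))
  · intro v hv
    exact (hne v hv (fun h => h0 (h ▸ hv))).differentiableWithinAt

lemma tp_decomp (Ω : Set ℂ) (f : ℂ → ℂ) (hf : DifferentiableOn ℂ f Ω)
    (z1 z2 : ℂ) (h12 : z1 ≠ z2) (r : ℝ)
    (hrΩ : ∀ w : ℂ, w ∉ Ω → r ≤ ‖(w - z1) * (w - z2)‖) :
    ∃ A B : ℂ → ℂ, DifferentiableOn ℂ A (Metric.ball 0 r) ∧
      DifferentiableOn ℂ B (Metric.ball 0 r) ∧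
      ∀ w, f w = A ((w - z1) * (w - z2)) * (w - z1) + B ((w - z1) * (w - z2)) * (w - z2) := by
  have hd : z2 - z1 ≠ 0 := sub_ne_zero.2 h12.symm
  set e : ℂ := ((z1 - z2) / 2) ^ 2 with he
  set c : ℂ := (z1 + z2) / 2 with hc
  set F : ℂ → ℂ := fun s => f (c + s) with hF
  set U : Set ℂ := {s | ‖s ^ 2 - e‖ < r} with hU
  have hopen : IsOpen U := isOpen_lt (by fun_prop) (by fun_prop)
  have hFd : DifferentiableOn ℂ F U := by
    refine hf.comp (by fun_prop) fun s hs => ?_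
    by_contra hcon
    have := hrΩ _ hcon
    rw [show (c + s - z1) * (c + s - z2) = s ^ 2 - e by rw [hc, he]; ring] at this
    exact absurd hs (not_lt.2 this)
  have hFn : DifferentiableOn ℂ (fun s => F (-s)) U :=
    hFd.comp (by fun_prop) fun s hs => by simpa [hU] using hs
  obtain ⟨H1, hH1, hH1'⟩ := tp_even e r (fun s => F s + F (-s))
    (fun s => by simp [add_comm]) (hFd.add hFn)
  have hK : DifferentiableOn ℂ (dslope (fun s => F s - F (-s)) 0) U := by
    by_cases h0 : (0 : ℂ) ∈ U
    · exact (Complex.differentiableOn_dslope (hopen.mem_nhds h0)).2 (hFd.sub hFn)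
    · exact (differentiableOn_dslope_of_notMem h0).2 (hFd.sub hFn)
  obtain ⟨H2, hH2, hH2'⟩ := tp_even e r (dslope (fun s => F s - F (-s)) 0) (fun s => by
    rcases eq_or_ne s 0 with rfl | hs
    · simp
    · rw [dslope_of_ne _ hs, dslope_of_ne _ (neg_ne_zero.2 hs), slope_def_field, slope_def_field]
      simp
      field_simp
      ring) hK
  have hKs : ∀ s, F s - F (-s) = s * H2 (s ^ 2) := by
    intro s
    rw [← hH2']
    have := sub_smul_dslope (fun s => F s - F (-s)) 0 s
    simpa using this.symm
  have hmaps : Set.MapsTo (fun u : ℂ => u + e) (Metric.ball 0 r) (Metric.ball e r) := by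
    intro u hu
    simpa using hu
  have g1 : DifferentiableOn ℂ (fun u => H1 (u + e)) (Metric.ball 0 r) :=
    hH1.comp (by fun_prop) hmaps
  have g2 : DifferentiableOn ℂ (fun u => H2 (u + e)) (Metric.ball 0 r) :=
    hH2.comp (by fun_prop) hmaps
  refine ⟨fun u => (1 / (2 * (z2 - z1))) * H1 (u + e) + (1 / 4) * H2 (u + e),
    fun u => (-1 / (2 * (z2 - z1))) * H1 (u + e) + (1 / 4) * H2 (u + e), ?_, ?_, ?_⟩
  · exact (g1.const_mul _).add (g2.const_mul _)
  · exact (g1.const_mul _).add (g2.const_mul _)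
  · intro w
    have k1 := hH1' (w - c)
    have k2 := hKs (w - c)
    have k3 : f w = F (w - c) := by simp [hF]
    have k4 : (w - z1) * (w - z2) + e = (w - c) ^ 2 := by rw [hc, he]; ring
    simp only [k4]
    rw [k3]
    have k5 : F (w - c) = (H1 ((w - c) ^ 2) + (w - c) * H2 ((w - c) ^ 2)) / 2 := by
      rw [← k1, ← k2]; ring
    rw [k5, hc]
    field_simp
    ring

lemma tp_iteratedDeriv_poly (P : ℂ[X]) (z : ℂ) (i : ℕ) :
    iteratedDeriv i (fun w => P.eval w) z = (i.factorial : ℂ) * (taylor z P).coeff i := by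
  have : ∀ Q : ℂ[X], iteratedDeriv i (fun w => Q.eval w) = fun w => (derivative^[i] Q).eval w := by
    induction i with
    | zero => intro Q; simp
    | succ i ih =>
      intro Q
      rw [iteratedDeriv_succ', Function.iterate_succ_apply, ← ih]
      congr 1
      funext w
      simp
  rw [this, taylor_coeff, ← factorial_smul_hasseDeriv]
  simp

lemma tp_iteratedDeriv (f g : ℂ → ℂ) (z0 : ℂ) (P : ℂ[X]) (n : ℕ) (hg : AnalyticAt ℂ g z0)
    (hfg : ∀ w, f w = P.eval w + (w - z0) ^ (n + 1) * g w) :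
    ∀ i ≤ n, iteratedDeriv i f z0 = (i.factorial : ℂ) * (taylor z0 P).coeff i := by
  intro i hi
  have hR : AnalyticAt ℂ (fun w => (w - z0) ^ (n + 1) * g w) z0 := by fun_prop
  have hP : AnalyticAt ℂ (fun w => P.eval w) z0 := by
    have := AnalyticAt.aeval_polynomial (analyticAt_id (𝕜 := ℂ) (z := z0)) P
    simpa using this
  have h0 : iteratedDeriv i (fun w => (w - z0) ^ (n + 1) * g w) z0 = 0 :=
    (natCast_le_analyticOrderAt_iff_iteratedDeriv_eq_zero hR).1
      ((natCast_le_analyticOrderAt hR (n := n + 1)).2 ⟨g, hg, by simp⟩) i (by omega)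
  rw [show f = fun w => P.eval w + (w - z0) ^ (n + 1) * g w from funext hfg,
    iteratedDeriv_fun_add hP.contDiffAt hR.contDiffAt, h0, add_zero, tp_iteratedDeriv_poly]

lemma tpP_eval (z1 z2 : ℂ) (a b : ℕ → ℂ) (n : ℕ) (w : ℂ) :
    (tpP z1 z2 a b n).eval w = ∑ m ∈ Finset.range (n + 1),
      (a m * (w - z1) + b m * (w - z2)) * ((w - z1) * (w - z2)) ^ m := by
  simp [tpP, eval_finsetSum]

lemma tpP_swap (z1 z2 : ℂ) (a b : ℕ → ℂ) (n : ℕ) : tpP z1 z2 a b n = tpP z2 z1 b a n := by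
  refine Finset.sum_congr rfl fun m _ => ?_
  rw [add_comm, mul_comm (X - C z1)]

lemma tp_ident (f A B : ℂ → ℂ) (z1 z2 : ℂ) (h12 : z1 ≠ z2)
    (hA : AnalyticAt ℂ A 0) (hB : AnalyticAt ℂ B 0)
    (hf : ∀ w, f w = A ((w - z1) * (w - z2)) * (w - z1) + B ((w - z1) * (w - z2)) * (w - z2))
    (n : ℕ) :
    twoPointCoeff f z1 z2 n = iteratedDeriv n A 0 / n.factorial ∧
    twoPointCoeff f z2 z1 n = iteratedDeriv n B 0 / n.factorial := by
  obtain ⟨gA, hgA, eA⟩ := hA.exists_eq_sum_add_pow_mul (n + 1)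
  obtain ⟨gB, hgB, eB⟩ := hB.exists_eq_sum_add_pow_mul (n + 1)
  set a : ℕ → ℂ := fun m => iteratedDeriv m A 0 / m.factorial with ha
  set b : ℕ → ℂ := fun m => iteratedDeriv m B 0 / m.factorial with hb
  have hmain : ∀ w, f w = (tpP z1 z2 a b n).eval w + ((w - z1) * (w - z2)) ^ (n + 1) *
      (gA ((w - z1) * (w - z2)) * (w - z1) + gB ((w - z1) * (w - z2)) * (w - z2)) := by
    intro w
    rw [hf, eA, eB, tpP_eval]
    have : ∀ m, (a m * (w - z1) + b m * (w - z2)) * ((w - z1) * (w - z2)) ^ m =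
        ((((w - z1) * (w - z2)) ^ m / m.factorial) • iteratedDeriv m A 0) * (w - z1) +
        ((((w - z1) * (w - z2)) ^ m / m.factorial) • iteratedDeriv m B 0) * (w - z2) := by
      intro m
      simp only [ha, hb, smul_eq_mul]
      ring
    rw [Finset.sum_congr rfl fun m _ => this m, Finset.sum_add_distrib, ← Finset.sum_mul,
      ← Finset.sum_mul]
    simp only [smul_eq_mul]
    ring
  have hcA : ∀ z0, (z0 - z1) * (z0 - z2) = 0 →
      AnalyticAt ℂ (fun w => gA ((w - z1) * (w - z2))) z0 := fun z0 h0 =>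
    AnalyticAt.fun_comp (f := fun w => (w - z1) * (w - z2)) (by rw [h0]; exact hgA) (by fun_prop)
  have hcB : ∀ z0, (z0 - z1) * (z0 - z2) = 0 →
      AnalyticAt ℂ (fun w => gB ((w - z1) * (w - z2))) z0 := fun z0 h0 =>
    AnalyticAt.fun_comp (f := fun w => (w - z1) * (w - z2)) (by rw [h0]; exact hgB) (by fun_prop)
  have h1 := tp_iteratedDeriv f (fun w => (w - z2) ^ (n + 1) *
      (gA ((w - z1) * (w - z2)) * (w - z1) + gB ((w - z1) * (w - z2)) * (w - z2))) z1
      (tpP z1 z2 a b n) n (by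
        have hX : AnalyticAt ℂ (fun w : ℂ => (w - z2) ^ (n + 1)) z1 := by fun_prop
        have hY : AnalyticAt ℂ (fun w : ℂ => w - z1) z1 := by fun_prop
        have hZ : AnalyticAt ℂ (fun w : ℂ => w - z2) z1 := by fun_prop
        exact hX.mul (((hcA z1 (by simp)).mul hY).add ((hcB z1 (by simp)).mul hZ)))
      (fun w => by rw [hmain, mul_pow (w - z1)]; ring)
  have h2 := tp_iteratedDeriv f (fun w => (w - z1) ^ (n + 1) *
      (gA ((w - z1) * (w - z2)) * (w - z1) + gB ((w - z1) * (w - z2)) * (w - z2))) z2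
      (tpP z1 z2 a b n) n (by
        have hX : AnalyticAt ℂ (fun w : ℂ => (w - z1) ^ (n + 1)) z2 := by fun_prop
        have hY : AnalyticAt ℂ (fun w : ℂ => w - z1) z2 := by fun_prop
        have hZ : AnalyticAt ℂ (fun w : ℂ => w - z2) z2 := by fun_prop
        exact hX.mul (((hcA z2 (by simp)).mul hY).add ((hcB z2 (by simp)).mul hZ)))
      (fun w => by rw [hmain, mul_pow (w - z1)]; ring)
  constructor
  · have := tp_coeff_eq f z1 z2 h12 n _ h1 h2
    rw [tpL_tpP z1 z2 h12] at this
    exact mul_right_cancel₀ (sub_ne_zero.2 h12.symm) this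
  · have := tp_coeff_eq f z2 z1 h12.symm n _ h2 h1
    rw [tpP_swap, tpL_tpP z2 z1 h12.symm] at this
    exact mul_right_cancel₀ (sub_ne_zero.2 h12) this

end TP

/-- Two-point Taylor expansion of an analytic function converges inside the Cassini oval. -/
theorem twoPointTaylor_tendsto
    (Ω : Set ℂ) (hΩ : IsOpen Ω) (f : ℂ → ℂ) (hf : DifferentiableOn ℂ f Ω)
    (z1 z2 : ℂ) (hz1 : z1 ∈ Ω) (hz2 : z2 ∈ Ω) (h12 : z1 ≠ z2)
    (z : ℂ) (hz : z ∈ Ω)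
    (r : ℝ) (hr : ‖(z - z1) * (z - z2)‖ < r)
    (hrΩ : ∀ w : ℂ, w ∉ Ω → r ≤ ‖(w - z1) * (w - z2)‖) :
    Filter.Tendsto
      (fun N : ℕ => ∑ n ∈ Finset.range N,
        (twoPointCoeff f z1 z2 n * (z - z1) + twoPointCoeff f z2 z1 n * (z - z2)) *
          ((z - z1) * (z - z2)) ^ n)
      Filter.atTop (nhds (f z)) := by
  obtain ⟨A, B, hA, hB, hAB⟩ := tp_decomp Ω f hf z1 z2 h12 r hrΩ
  have hr0 : 0 < r := lt_of_le_of_lt (norm_nonneg _) hr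
  have h0 : Metric.ball (0 : ℂ) r ∈ nhds (0 : ℂ) := Metric.ball_mem_nhds _ hr0
  have hu : (z - z1) * (z - z2) ∈ Metric.ball (0 : ℂ) r := by simpa using hr
  have sA := (Complex.hasSum_taylorSeries_on_ball hA hu).mul_right (z - z1)
  have sB := (Complex.hasSum_taylorSeries_on_ball hB hu).mul_right (z - z2)
  have s := sA.add sB
  rw [← hAB] at s
  refine s.tendsto_sum_nat.congr fun N => Finset.sum_congr rfl fun n _ => ?_
  obtain ⟨e1, e2⟩ := tp_ident f A B z1 z2 h12 (hA.analyticAt h0) (hB.analyticAt h0) hAB n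
  rw [e1, e2]
  simp only [sub_zero, smul_eq_mul]
  ring
end

section
/- Let Ω ⊆ ℂ be open, let f : ℂ → ℂ be analytic on Ω, and let z1, z2 ∈ Ω with z1 ≠ z2. Let z ∈ Ω and suppose there exists r > |(z−z1)(z−z2)| such that |(w−z1)(w−z2)| ≥ r for every w ∈ ℂ \ Ω. Define A_n = −z1·a_n(z1,z2) − z2·a_n(z2,z1) and B_n = a_n(z1,z2) + a_n(z2,z1). Then f(z) = Σ_{n=0}^{∞} (A_n + B_n·z)·((z−z1)(z−z2))^n, i.e., the partial sums Σ_{n=0}^{N−1} (A_n + B_n·z)·((z−z1)(z−z2))^n converge to f(z) as N → ∞. -/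
/-- Taylor series of `f` at `z`. -/
noncomputable def tps (f : ℂ → ℂ) (z : ℂ) : PowerSeries ℂ :=
  PowerSeries.mk fun j => iteratedDeriv j f z / (Nat.factorial j : ℂ)

/-- Inverse of `X + e`. -/
noncomputable def invX (e : ℂ) : PowerSeries ℂ := (PowerSeries.X + PowerSeries.C e)⁻¹

theorem invX_mul (e : ℂ) (he : e ≠ 0) : (PowerSeries.X + PowerSeries.C e) * invX e = 1 := by
  unfold invX
  exact PowerSeries.mul_inv_cancel _ (by simpa using he)

theorem invX_pow_eq (e : ℂ) (he : e ≠ 0) (q : ℕ) :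
    invX e ^ (q + 1) = PowerSeries.mk fun k =>
      (-1 : ℂ) ^ k * ((q + k).choose k : ℂ) * (e⁻¹) ^ (q + 1 + k) := by
  have key : ∀ F H : PowerSeries ℂ, (PowerSeries.X + PowerSeries.C e) * F = H → F = invX e * H := by
    intro F H h
    rw [← h, ← mul_assoc, mul_comm (invX e), invX_mul e he, one_mul]
  induction q with
  | zero =>
    rw [zero_add, pow_one]
    symm
    refine (key _ 1 ?_).trans (mul_one _)
    ext k
    rw [add_mul, map_add, PowerSeries.coeff_C_mul]
    cases k with
    | zero => simp [he]
    | succ k =>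
      rw [PowerSeries.coeff_succ_X_mul]
      simp [PowerSeries.coeff_one]
      field_simp
      ring
  | succ q ih =>
    rw [pow_succ', ih]
    symm
    apply key
    ext k
    rw [add_mul, map_add, PowerSeries.coeff_C_mul]
    cases k with
    | zero => simp [pow_succ]; field_simp
    | succ k =>
      rw [PowerSeries.coeff_succ_X_mul]
      simp only [PowerSeries.coeff_mk]
      have h : (q + 1 + (k + 1)).choose (k + 1) = (q + 1 + k).choose k + (q + 1 + k).choose (k + 1) :=
        Nat.choose_succ_succ _ _
      have h2 : q + (k + 1) = q + 1 + k := by ring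
      rw [h, h2]
      push_cast
      have h3 : e * e⁻¹ ^ (q + 1 + 1 + (k + 1)) = e⁻¹ ^ (q + 1 + 1 + k) := by
        rw [← add_assoc, pow_succ]; field_simp
      have h4 : q + 1 + (k + 1) = q + 1 + 1 + k := by ring
      rw [h4]
      linear_combination ((-1 : ℂ) ^ (k + 1) * (((q + 1 + k).choose k : ℂ) + ((q + 1 + k).choose (k + 1) : ℂ))) * h3

theorem coeff_invX_pow (e : ℂ) (he : e ≠ 0) (q k : ℕ) :
    PowerSeries.coeff k (invX e ^ (q + 1)) =
      (-1 : ℂ) ^ k * ((q + k).choose k : ℂ) * (e⁻¹) ^ (q + 1 + k) := by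
  rw [invX_pow_eq e he, PowerSeries.coeff_mk]

/-- The residue functional. -/
noncomputable def resF (e : ℂ) (ν : ℕ) (F1 F2 : PowerSeries ℂ) : ℂ :=
  PowerSeries.coeff (ν + 1) (F2 * invX e ^ (ν + 1)) + PowerSeries.coeff ν (F1 * invX (-e) ^ (ν + 2))

theorem twoPointCoeff_eq (f : ℂ → ℂ) (z1 z2 : ℂ) (h : z1 ≠ z2) (ν : ℕ) :
    twoPointCoeff f z1 z2 (ν + 1) = resF (z2 - z1) ν (tps f z1) (tps f z2) / (z2 - z1) := by
  have he : z2 - z1 ≠ 0 := sub_ne_zero.2 h.symm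
  have hd : z1 - z2 ≠ 0 := sub_ne_zero.2 h
  rw [eq_div_iff he]
  unfold twoPointCoeff resF
  rw [if_neg (Nat.succ_ne_zero _), neg_sub]
  rw [mul_comm (tps f z2), mul_comm (tps f z1)]
  rw [PowerSeries.coeff_mul, PowerSeries.coeff_mul, Finset.Nat.sum_antidiagonal_eq_sum_range_succ_mk,
    Finset.Nat.sum_antidiagonal_eq_sum_range_succ_mk]
  have e2 : ∑ k ∈ Finset.range ν.succ, PowerSeries.coeff k (invX (z1 - z2) ^ (ν + 2)) *
      PowerSeries.coeff (ν - k) (tps f z1) = ∑ k ∈ Finset.range (ν + 2), 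
      (-1 : ℂ) ^ (k + 1) * (k : ℂ) * ((Nat.factorial (ν + k) : ℂ) / (Nat.factorial k * Nat.factorial (ν + 1))) 
      * ((z1 - z2)⁻¹) ^ (ν + 1 + k) * (iteratedDeriv (ν + 1 - k) f z1 / (Nat.factorial (ν + 1 - k) : ℂ)) := by
    rw [Finset.sum_range_succ' _ (ν + 1)]
    simp only [Nat.cast_zero, mul_zero, zero_mul, add_zero]
    refine Finset.sum_congr rfl fun k hk => ?_
    rw [coeff_invX_pow _ hd, tps, PowerSeries.coeff_mk]
    rw [Nat.add_sub_add_right]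
    have : ((ν + 1 + k).choose k : ℂ) = (Nat.factorial (ν + 1 + k) : ℂ) / (Nat.factorial (ν + 1) * Nat.factorial k) := by
      rw [Nat.add_choose]
      rw [Nat.cast_div (Nat.factorial_mul_factorial_dvd_factorial_add _ _) (by exact_mod_cast mul_ne_zero (Nat.factorial_ne_zero _) (Nat.factorial_ne_zero _))]
      push_cast; ring
    rw [this, Nat.factorial_succ k, show ν + (k + 1) = ν + 1 + k by ring, show ν + 1 + 1 + k = ν + 1 + (k + 1) by ring]
    have hk0 : (k : ℂ) + 1 ≠ 0 := by exact_mod_cast Nat.succ_ne_zero k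
    have := Nat.factorial_ne_zero k
    push_cast
    field_simp
    ring
  rw [e2, ← Finset.sum_add_distrib, Finset.sum_mul]
  refine Finset.sum_congr rfl fun k hk => ?_
  rw [coeff_invX_pow _ he, tps, PowerSeries.coeff_mk]
  have : ((ν + k).choose k : ℂ) = (Nat.factorial (ν + k) : ℂ) / (Nat.factorial ν * Nat.factorial k) := by
    rw [Nat.add_choose]
    rw [Nat.cast_div (Nat.factorial_mul_factorial_dvd_factorial_add _ _) (by exact_mod_cast mul_ne_zero (Nat.factorial_ne_zero _) (Nat.factorial_ne_zero _))]
    push_cast; ring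
  rw [this, show ν + 1 + k - 1 = ν + k by omega, Nat.factorial_succ ν]
  have hn0 : (ν : ℂ) + 1 ≠ 0 := by exact_mod_cast Nat.succ_ne_zero ν
  have hn1 : (Nat.factorial ν : ℂ) ≠ 0 := by exact_mod_cast Nat.factorial_ne_zero ν
  have hn2 : (Nat.factorial k : ℂ) ≠ 0 := by exact_mod_cast Nat.factorial_ne_zero k
  have hn3 : (Nat.factorial (ν + 1 - k) : ℂ) ≠ 0 := by exact_mod_cast Nat.factorial_ne_zero _
  have hz : z2 - z1 = -(z1 - z2) := by ring
  rw [hz]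
  generalize z1 - z2 = d at hd ⊢
  rw [inv_neg, neg_pow (d⁻¹), inv_pow]
  have h1 : (-1 : ℂ) ^ k * (-1) ^ (ν + 1 + k) = (-1) ^ (ν + 1) := by
    rw [pow_add _ (ν + 1), mul_left_comm, ← mul_pow]; simp
  have h2 : (-1 : ℂ) ^ (ν + 1 + 1) = - (-1) ^ (ν + 1) := by ring
  rw [h2, ← h1]
  push_cast
  field_simp
  ring

theorem resF_add (e : ℂ) (ν : ℕ) (F1 F2 G1 G2 : PowerSeries ℂ) :
    resF e ν (F1 + G1) (F2 + G2) = resF e ν F1 F2 + resF e ν G1 G2 := by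
  simp only [resF, add_mul, map_add]; ring

theorem resF_smul (e : ℂ) (ν : ℕ) (c : ℂ) (F1 F2 : PowerSeries ℂ) :
    resF e ν (PowerSeries.C c * F1) (PowerSeries.C c * F2) = c * resF e ν F1 F2 := by
  simp only [resF, mul_assoc, PowerSeries.coeff_C_mul]; ring

theorem resF_sum (e : ℂ) (ν N : ℕ) (F1 F2 : ℕ → PowerSeries ℂ) :
    resF e ν (∑ m ∈ Finset.range N, F1 m) (∑ m ∈ Finset.range N, F2 m)
      = ∑ m ∈ Finset.range N, resF e ν (F1 m) (F2 m) := by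
  simp only [resF, Finset.sum_mul, map_sum, Finset.sum_add_distrib]

theorem cancel_pow (e : ℂ) (he : e ≠ 0) (a b : ℕ) :
    (PowerSeries.X + PowerSeries.C e) ^ a * invX e ^ (a + b) = invX e ^ b := by
  rw [pow_add, ← mul_assoc, ← mul_pow, invX_mul e he, one_pow, one_mul]

theorem coeff_X_pow_mul_lt (F : PowerSeries ℂ) {m k : ℕ} (h : k < m) :
    PowerSeries.coeff k (PowerSeries.X ^ m * F) = 0 := by
  rw [PowerSeries.coeff_X_pow_mul', if_neg (by omega)]

theorem coeff_X_pow_mul_add (F : PowerSeries ℂ) (m k : ℕ) :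
    PowerSeries.coeff (m + k) (PowerSeries.X ^ m * F) = PowerSeries.coeff k F := by
  rw [add_comm, PowerSeries.coeff_X_pow_mul]

open PowerSeries in
theorem resF_rem (e : ℂ) (ν : ℕ) (G1 G2 : PowerSeries ℂ) :
    resF e ν (X ^ (ν + 2) * G1) (X ^ (ν + 2) * G2) = 0 := by
  unfold resF
  rw [mul_assoc, mul_assoc, coeff_X_pow_mul_lt _ (by omega), coeff_X_pow_mul_lt _ (by omega), add_zero]

open PowerSeries in
theorem resF_alpha (e : ℂ) (he : e ≠ 0) (ν m : ℕ) (hm : m ≤ ν + 1) :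
    resF e ν (X ^ (m + 1) * (X + C (-e)) ^ m) (X ^ m * (X + C e) ^ (m + 1))
      = if m = ν + 1 then e else 0 := by
  have hd : -e ≠ 0 := neg_ne_zero.2 he
  unfold resF
  rw [mul_assoc, mul_assoc]
  rcases Nat.lt_or_ge m ν with h | h
  · obtain ⟨p, rfl⟩ := Nat.exists_eq_add_of_lt h
    rw [if_neg (by omega)]
    rw [show m + p + 1 + 1 = (m + 1) + (p + 1) by ring, cancel_pow e he,
      show m + p + 1 + 2 = m + (p + 2 + 1) by ring, cancel_pow _ hd,
      show m + 1 + (p + 1) = m + (p + 2) by ring, coeff_X_pow_mul_add,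
      show m + p + 1 = (m + 1) + p by ring, coeff_X_pow_mul_add, coeff_invX_pow _ he, coeff_invX_pow _ hd,
      inv_neg, neg_pow (e⁻¹)]
    have h1 : (p + 2 + p).choose p = (p + (p + 2)).choose (p + 2) := by
      rw [add_comm]; exact Nat.choose_symm_add
    have h2 : (-1 : ℂ) ^ (p + 2 + 1 + p) = -1 := by
      rw [show p + 2 + 1 + p = 2 * (p + 1) + 1 by ring, pow_succ, pow_mul]; simp
    rw [h1, h2]
    ring
  · obtain h | h : m = ν ∨ m = ν + 1 := by omega
    · subst h
      rw [if_neg (by omega), coeff_X_pow_mul_lt _ (by omega : m < m + 1), coeff_X_pow_mul_add]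
      have := cancel_pow e he (m + 1) 0
      rw [add_zero] at this
      rw [this]; simp [PowerSeries.coeff_one]
    · subst h
      rw [if_pos rfl, coeff_X_pow_mul_lt _ (by omega : ν < ν + 1 + 1)]
      have := coeff_X_pow_mul_add ((X + C e) ^ (ν + 1 + 1) * invX e ^ (ν + 1)) (ν + 1) 0
      rw [add_zero] at this
      rw [this, pow_succ' _ (ν + 1), mul_assoc]
      have := cancel_pow e he (ν + 1) 0
      rw [add_zero] at this
      rw [this]; simp

open PowerSeries in
theorem resF_beta (e : ℂ) (he : e ≠ 0) (ν m : ℕ) (hm : m ≤ ν + 1) :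
    resF e ν (X ^ m * (X + C (-e)) ^ (m + 1)) (X ^ (m + 1) * (X + C e) ^ m) = 0 := by
  have hd : -e ≠ 0 := neg_ne_zero.2 he
  unfold resF
  rw [mul_assoc, mul_assoc]
  rcases Nat.lt_or_ge ν m with h | h
  · rw [coeff_X_pow_mul_lt _ (by omega), coeff_X_pow_mul_lt _ (by omega), add_zero]
  · obtain ⟨p, rfl⟩ := Nat.exists_eq_add_of_le h
    rw [show m + p + 2 = (m + 1) + (p + 1) by ring, cancel_pow _ hd,
      show m + p + 1 = m + (p + 1) by ring, cancel_pow _ he, coeff_X_pow_mul_add,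
      show m + (p + 1) = m + 1 + p by ring, coeff_X_pow_mul_add, coeff_invX_pow _ he, coeff_invX_pow _ hd,
      inv_neg, neg_pow (e⁻¹)]
    have h2 : (-1 : ℂ) ^ (p + 1 + p) = -1 := by
      rw [show p + 1 + p = 2 * p + 1 by ring, pow_succ, pow_mul]; simp
    rw [h2]; ring

theorem tps_congr {f g : ℂ → ℂ} {z : ℂ} (h : f =ᶠ[nhds z] g) : tps f z = tps g z := by
  ext j
  simp only [tps, PowerSeries.coeff_mk, h.iteratedDeriv_eq j]

theorem tps_add {f g : ℂ → ℂ} {z : ℂ} (hf : AnalyticAt ℂ f z) (hg : AnalyticAt ℂ g z) :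
    tps (fun w => f w + g w) z = tps f z + tps g z := by
  ext j
  have := iteratedDeriv_add (n := j) hf.contDiffAt hg.contDiffAt
  rw [map_add]
  simp only [tps, PowerSeries.coeff_mk]
  rw [← add_div, ← this]
  rfl

theorem tps_mul {f g : ℂ → ℂ} {z : ℂ} (hf : AnalyticAt ℂ f z) (hg : AnalyticAt ℂ g z) :
    tps (fun w => f w * g w) z = tps f z * tps g z := by
  ext j
  have := iteratedDeriv_mul (n := j) hf.contDiffAt hg.contDiffAt
  rw [PowerSeries.coeff_mul, Finset.Nat.sum_antidiagonal_eq_sum_range_succ_mk]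
  simp only [tps, PowerSeries.coeff_mk]
  change iteratedDeriv j (f * g) z / _ = _
  rw [this, Finset.sum_div]
  refine Finset.sum_congr rfl fun i hi => ?_
  have hij : i ≤ j := by simpa [Nat.lt_succ_iff] using hi
  rw [Nat.cast_choose ℂ hij]
  have hn1 : (Nat.factorial j : ℂ) ≠ 0 := by exact_mod_cast Nat.factorial_ne_zero _
  field_simp

theorem tps_const (c z : ℂ) : tps (fun _ => c) z = PowerSeries.C c := by
  ext j
  simp only [tps, PowerSeries.coeff_mk, iteratedDeriv_const, PowerSeries.coeff_C]
  split_ifs with h <;> simp [h]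

theorem tps_sub_const (a z : ℂ) :
    tps (fun w => w - a) z = PowerSeries.X + PowerSeries.C (z - a) := by
  ext j
  simp only [tps, PowerSeries.coeff_mk, map_add, PowerSeries.coeff_C, PowerSeries.coeff_X]
  rcases j with _ | _ | j
  · simp
  · simp [iteratedDeriv_one]
  · rw [iteratedDeriv_succ', iteratedDeriv_succ']
    simp

theorem tps_pow {f : ℂ → ℂ} {z : ℂ} (hf : AnalyticAt ℂ f z) (m : ℕ) :
    tps (fun w => f w ^ m) z = tps f z ^ m := by
  induction m with
  | zero => simpa using tps_const 1 z
  | succ m ih =>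
    simp only [pow_succ]
    rw [tps_mul (hf.fun_pow m) hf, ih]

theorem tps_sum {f : ℕ → ℂ → ℂ} {z : ℂ} (hf : ∀ m, AnalyticAt ℂ (f m) z) (N : ℕ) :
    tps (fun w => ∑ m ∈ Finset.range N, f m w) z = ∑ m ∈ Finset.range N, tps (f m) z := by
  induction N with
  | zero => simpa using tps_const 0 z
  | succ N ih =>
    simp only [Finset.sum_range_succ]
    rw [tps_add (Finset.analyticAt_fun_sum _ fun m _ => hf m) (hf N), ih]

/-- Taylor expansion with analytic remainder. -/
theorem exists_taylor_rem (N : ℕ) (h : ℂ → ℂ) (hh : AnalyticAt ℂ h 0) :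
    ∃ g : ℂ → ℂ, AnalyticAt ℂ g 0 ∧ ∀ u, h u =
      ∑ m ∈ Finset.range N, PowerSeries.coeff m (tps h 0) * u ^ m + u ^ N * g u := by
  induction N generalizing h with
  | zero => exact ⟨h, hh, by simp⟩
  | succ N ih =>
    have hd : AnalyticAt ℂ (dslope h 0) 0 := by
      obtain ⟨p, hp⟩ := hh
      exact ⟨_, hp.has_fpower_series_dslope_fslope⟩
    have he : ∀ u, h u = h 0 + u * dslope h 0 u := by
      intro u
      have := sub_smul_dslope h 0 u
      simp only [sub_zero, smul_eq_mul] at this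
      rw [this]; ring
    have ht : tps h 0 = PowerSeries.C (h 0) + PowerSeries.X * tps (dslope h 0) 0 := by
      have h1 : h = fun u => h 0 + u * dslope h 0 u := funext he
      have h2 := tps_sub_const 0 0
      simp only [sub_zero, map_zero, add_zero] at h2
      have hid : AnalyticAt ℂ (fun u : ℂ => u) 0 := analyticAt_id
      conv_lhs => rw [h1]
      rw [tps_add analyticAt_const (hid.fun_mul hd), tps_const, tps_mul hid hd, h2]
    obtain ⟨g, hg, hgu⟩ := ih _ hd
    refine ⟨g, hg, fun u => ?_⟩
    rw [he u, hgu u, Finset.sum_range_succ', ht]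
    have h3 : ∀ m, PowerSeries.coeff (m + 1) (PowerSeries.C (h 0) + PowerSeries.X * tps (dslope h 0) 0)
        = PowerSeries.coeff m (tps (dslope h 0) 0) := by
      intro m
      rw [map_add, PowerSeries.coeff_succ_X_mul, PowerSeries.coeff_C, if_neg (by omega), zero_add]
    simp only [h3]
    rw [mul_add, Finset.mul_sum]
    have h4 : ∀ m, u * (PowerSeries.coeff m (tps (dslope h 0) 0) * u ^ m) =
      PowerSeries.coeff m (tps (dslope h 0) 0) * u ^ (m + 1) := fun m => by ring
    simp only [h4]
    simp
    ring

theorem twoPointCoeff_of_expansion (f g : ℂ → ℂ) (z1 z2 : ℂ) (h12 : z1 ≠ z2) (n : ℕ)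
    (α β : ℕ → ℂ) (hg1 : AnalyticAt ℂ g z1) (hg2 : AnalyticAt ℂ g z2) (F : ℂ → ℂ)
    (hF : F = fun w => ∑ m ∈ Finset.range (n + 1),
      (α m * (w - z1) + β m * (w - z2)) * ((w - z1) * (w - z2)) ^ m
        + ((w - z1) * (w - z2)) ^ (n + 1) * g w)
    (h1 : f =ᶠ[nhds z1] F) (h2 : f =ᶠ[nhds z2] F) :
    twoPointCoeff f z1 z2 n = α n := by
  have he : z2 - z1 ≠ 0 := sub_ne_zero.2 h12.symm
  rcases n with _ | ν
  · rw [twoPointCoeff, if_pos rfl, h2.eq_of_nhds, hF]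
    simp
    field_simp
  rw [twoPointCoeff_eq f z1 z2 h12, div_eq_iff he, tps_congr h1, tps_congr h2]
  have hT : ∀ z, AnalyticAt ℂ g z → tps F z = ∑ m ∈ Finset.range (ν + 1 + 1),
      (PowerSeries.C (α m) * (PowerSeries.X + PowerSeries.C (z - z1)) +
        PowerSeries.C (β m) * (PowerSeries.X + PowerSeries.C (z - z2))) *
        ((PowerSeries.X + PowerSeries.C (z - z1)) * (PowerSeries.X + PowerSeries.C (z - z2))) ^ m
      + ((PowerSeries.X + PowerSeries.C (z - z1)) * (PowerSeries.X + PowerSeries.C (z - z2))) ^ (ν + 1 + 1)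
        * tps g z := by
    intro z hg
    have a1 : AnalyticAt ℂ (fun w => w - z1) z := by fun_prop
    have a2 : AnalyticAt ℂ (fun w => w - z2) z := by fun_prop
    rw [hF, tps_add (by fun_prop) (by fun_prop), tps_sum (fun m => by fun_prop),
      tps_mul (by fun_prop) hg, tps_pow (by fun_prop), tps_mul a1 a2, tps_sub_const, tps_sub_const]
    congr 1
    refine Finset.sum_congr rfl fun m _ => ?_
    rw [tps_mul (by fun_prop) (by fun_prop), tps_pow (by fun_prop), tps_mul a1 a2,
      tps_add (by fun_prop) (by fun_prop), tps_mul (by fun_prop) a1, tps_mul (by fun_prop) a2,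
      tps_const, tps_const, tps_sub_const, tps_sub_const]
  rw [hT z1 hg1, hT z2 hg2, resF_add, resF_sum, sub_self, sub_self, map_zero, add_zero,
    show z1 - z2 = -(z2 - z1) by ring]
  generalize z2 - z1 = e at he
  have hr : resF e ν ((PowerSeries.X * (PowerSeries.X + PowerSeries.C (-e))) ^ (ν + 1 + 1) * tps g z1)
      (((PowerSeries.X + PowerSeries.C e) * PowerSeries.X) ^ (ν + 1 + 1) * tps g z2) = 0 := by
    rw [mul_comm _ PowerSeries.X, mul_pow, mul_pow, mul_assoc, mul_assoc]
    exact resF_rem _ _ _ _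
  rw [hr, add_zero]
  have hterm : ∀ m ∈ Finset.range (ν + 1 + 1),
      resF e ν ((PowerSeries.C (α m) * PowerSeries.X + PowerSeries.C (β m) * (PowerSeries.X + PowerSeries.C (-e))) *
          (PowerSeries.X * (PowerSeries.X + PowerSeries.C (-e))) ^ m)
        ((PowerSeries.C (α m) * (PowerSeries.X + PowerSeries.C e) + PowerSeries.C (β m) * PowerSeries.X) *
          ((PowerSeries.X + PowerSeries.C e) * PowerSeries.X) ^ m) = if m = ν + 1 then α m * e else 0 := by
    intro m hm
    have hm' : m ≤ ν + 1 := by simpa [Nat.lt_succ_iff] using hm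
    have e1 : (PowerSeries.C (α m) * PowerSeries.X + PowerSeries.C (β m) * (PowerSeries.X + PowerSeries.C (-e))) *
          (PowerSeries.X * (PowerSeries.X + PowerSeries.C (-e))) ^ m =
        PowerSeries.C (α m) * (PowerSeries.X ^ (m + 1) * (PowerSeries.X + PowerSeries.C (-e)) ^ m) +
        PowerSeries.C (β m) * (PowerSeries.X ^ m * (PowerSeries.X + PowerSeries.C (-e)) ^ (m + 1)) := by
      rw [mul_pow, pow_succ, pow_succ]; ring
    have e2 : (PowerSeries.C (α m) * (PowerSeries.X + PowerSeries.C e) + PowerSeries.C (β m) * PowerSeries.X) *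
          ((PowerSeries.X + PowerSeries.C e) * PowerSeries.X) ^ m =
        PowerSeries.C (α m) * (PowerSeries.X ^ m * (PowerSeries.X + PowerSeries.C e) ^ (m + 1)) +
        PowerSeries.C (β m) * (PowerSeries.X ^ (m + 1) * (PowerSeries.X + PowerSeries.C e) ^ m) := by
      rw [mul_pow, pow_succ, pow_succ]; ring
    rw [e1, e2, resF_add, resF_smul, resF_smul, resF_alpha e he ν m hm', resF_beta e he ν m hm']
    split_ifs <;> simp
  rw [Finset.sum_congr rfl hterm, Finset.sum_ite_eq' , if_pos (by simp)]

/-- Even functions factor holomorphically through the square. -/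
theorem exists_even_factor (U : Set ℂ) (hU : IsOpen U) (h : ℂ → ℂ)
    (hd : ∀ v, v ^ 2 ∈ U → DifferentiableAt ℂ h v) (heven : ∀ v, v ^ 2 ∈ U → h (-v) = h v) :
    ∃ H : ℂ → ℂ, DifferentiableOn ℂ H U ∧ ∀ v, v ^ 2 ∈ U → H (v ^ 2) = h v := by
  have hs : ∀ q : ℂ, ∃ s : ℂ, s ^ 2 = q := fun q => by
    obtain ⟨s, hs⟩ := IsAlgClosed.exists_pow_nat_eq q (n := 2) (by norm_num)
    exact ⟨s, hs⟩
  choose s hs using hs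
  have key : ∀ v, v ^ 2 ∈ U → h (s (v ^ 2)) = h v := by
    intro v hv
    rcases sq_eq_sq_iff_eq_or_eq_neg.1 (hs (v ^ 2)) with h1 | h1
    · rw [h1]
    · rw [h1, heven v hv]
  have hne : ∀ q ∈ U, q ≠ 0 → DifferentiableAt ℂ (fun q => h (s q)) q := by
    intro q0 hq0 hq
    obtain ⟨v0, hv0⟩ : ∃ v, v ^ 2 = q0 := ⟨_, hs q0⟩
    have hσ : DifferentiableAt ℂ (fun q : ℂ => v0 * (q / q0) ^ (1 / 2 : ℂ)) q0 := by
      refine DifferentiableAt.const_mul ?_ _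
      refine DifferentiableAt.cpow_const (by fun_prop) ?_
      rw [div_self hq]; exact Complex.one_mem_slitPlane
    have hσ2 : ∀ q : ℂ, (v0 * (q / q0) ^ (1 / 2 : ℂ)) ^ 2 = q := by
      intro q
      rw [mul_pow, hv0, ← Complex.cpow_nat_mul]
      simp
      field_simp
    have heq : (fun q => h (s q)) =ᶠ[nhds q0] fun q => h (v0 * (q / q0) ^ (1 / 2 : ℂ)) := by
      filter_upwards [hU.mem_nhds hq0] with q hq
      have := key (v0 * (q / q0) ^ (1 / 2 : ℂ)) (by rw [hσ2]; exact hq)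
      rwa [hσ2] at this
    refine DifferentiableAt.congr_of_eventuallyEq ?_ heq
    refine DifferentiableAt.comp (g := h) q0 ?_ hσ
    apply hd
    rw [hσ2]; exact hq0
  refine ⟨fun q => h (s q), fun q hq => DifferentiableAt.differentiableWithinAt ?_, key⟩
  rcases eq_or_ne q 0 with rfl | h0
  · refine (Complex.analyticAt_of_differentiable_on_punctured_nhds_of_continuousAt ?_ ?_).differentiableAt
    · filter_upwards [self_mem_nhdsWithin, mem_nhdsWithin_of_mem_nhds (hU.mem_nhds hq)] with q h1 h2
      exact hne q h2 h1
    · have hs0 : s 0 = 0 := by simpa using hs 0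
      have hsc : ContinuousAt s 0 := by
        rw [ContinuousAt, hs0, tendsto_zero_iff_norm_tendsto_zero]
        have : ∀ q, ‖s q‖ = Real.sqrt ‖q‖ := by
          intro q
          have h2 : ‖q‖ = ‖s q‖ ^ 2 := by rw [← norm_pow, hs]
          rw [h2, Real.sqrt_sq (norm_nonneg _)]
        simp only [this]
        have hc : Continuous fun q : ℂ => Real.sqrt ‖q‖ := by fun_prop
        simpa using hc.tendsto 0
      refine ContinuousAt.comp (g := h) ?_ hsc
      exact (hd _ (by rw [hs]; exact hq)).continuousAt
  · exact hne q hq h0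

theorem exists_AB (Ω : Set ℂ) (hΩ : IsOpen Ω) (f : ℂ → ℂ) (hf : DifferentiableOn ℂ f Ω)
    (z1 z2 : ℂ) (r : ℝ) (hrΩ : ∀ w : ℂ, w ∉ Ω → r ≤ ‖(w - z1) * (w - z2)‖) :
    ∃ Ah Bh : ℂ → ℂ, DifferentiableOn ℂ Ah (Metric.ball 0 r) ∧
      DifferentiableOn ℂ Bh (Metric.ball 0 r) ∧
      ∀ w, ‖(w - z1) * (w - z2)‖ < r →
        f w = Ah ((w - z1) * (w - z2)) + Bh ((w - z1) * (w - z2)) * w := by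
  set c : ℂ := (z1 + z2) / 2 with hc
  set δ : ℂ := ((z1 - z2) / 2) ^ 2 with hδ
  have hP : ∀ v : ℂ, (c + v - z1) * (c + v - z2) = v ^ 2 - δ := fun v => by rw [hc, hδ]; ring
  set U : Set ℂ := Metric.ball δ r with hU
  have hUo : IsOpen U := Metric.isOpen_ball
  have hfd : ∀ v : ℂ, v ^ 2 ∈ U → DifferentiableAt ℂ f (c + v) := by
    intro v hv
    refine hf.differentiableAt (hΩ.mem_nhds ?_)
    by_contra hcon
    have h1 := hrΩ _ hcon
    rw [hP] at h1
    rw [hU, Metric.mem_ball, dist_eq_norm] at hv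
    linarith
  have hp : ∀ v : ℂ, v ^ 2 ∈ U → DifferentiableAt ℂ (fun v => f (c + v)) v := fun v hv =>
    DifferentiableAt.comp (g := f) (f := fun v => c + v) v (hfd v hv) (by fun_prop)
  have hm : ∀ v : ℂ, v ^ 2 ∈ U → DifferentiableAt ℂ (fun v => f (c + -v)) v := fun v hv =>
    DifferentiableAt.comp (g := f) (f := fun v => c + -v) v (hfd (-v) (by rwa [neg_sq])) (by fun_prop)
  set Ev : ℂ → ℂ := fun v => (f (c + v) + f (c + -v)) / 2 with hEv
  set Od : ℂ → ℂ := fun v => (f (c + v) - f (c + -v)) / 2 with hOd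
  have hOdd : ∀ v : ℂ, v ^ 2 ∈ U → DifferentiableAt ℂ Od v := fun v hv =>
    ((hp v hv).fun_sub (hm v hv)).div_const 2
  have hOd0 : Od 0 = 0 := by simp [hOd]
  have hOmul : ∀ v, v * dslope Od 0 v = Od v := by
    intro v
    have := sub_smul_dslope Od 0 v
    simpa [hOd0] using this
  obtain ⟨E, hE, hEe⟩ := exists_even_factor U hUo Ev
    (fun v hv => ((hp v hv).fun_add (hm v hv)).div_const 2)
    (fun v _ => by simp only [hEv, neg_neg]; ring)
  obtain ⟨O, hO, hOe⟩ := exists_even_factor U hUo (dslope Od 0)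
    (fun v hv => by
      rcases eq_or_ne v 0 with rfl | h0
      · have hopen : IsOpen {v : ℂ | v ^ 2 ∈ U} := hUo.preimage (by fun_prop)
        have han : AnalyticAt ℂ Od 0 :=
          DifferentiableOn.analyticAt (s := {v : ℂ | v ^ 2 ∈ U})
            (fun v hv => (hOdd v hv).differentiableWithinAt) (hopen.mem_nhds hv)
        obtain ⟨p, hp⟩ := han
        exact (AnalyticAt.differentiableAt ⟨_, hp.has_fpower_series_dslope_fslope⟩)
      · exact (differentiableAt_dslope_of_ne h0).2 (hOdd v hv))
    (fun v _ => by
      rcases eq_or_ne v 0 with rfl | h0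
      · simp
      · have h1 := hOmul v
        have h2 := hOmul (-v)
        have h3 : Od (-v) = - Od v := by simp only [hOd, neg_neg]; ring
        apply mul_left_cancel₀ h0
        linear_combination -h1 - h2 - h3)
  have hshift : ∀ G : ℂ → ℂ, DifferentiableOn ℂ G U →
      DifferentiableOn ℂ (fun u => G (u + δ)) (Metric.ball 0 r) := by
    intro G hG
    refine DifferentiableOn.comp (g := G) (f := fun u => u + δ) hG (by fun_prop) ?_
    intro u hu
    simpa [hU, dist_eq_norm] using hu
  refine ⟨fun u => E (u + δ) - c * O (u + δ), fun u => O (u + δ),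
    (hshift E hE).fun_sub ((hshift O hO).const_mul c), hshift O hO, fun w hw => ?_⟩
  have h1 := hP (w - c)
  rw [add_sub_cancel] at h1
  have h2 : (w - c) ^ 2 ∈ U := by
    rw [hU, Metric.mem_ball, dist_eq_norm, ← h1]; exact hw
  have h3 : (w - z1) * (w - z2) + δ = (w - c) ^ 2 := by rw [h1]; ring
  simp only [h3]
  rw [hEe _ h2, hOe _ h2]
  have h4 := hOmul (w - c)
  have h5 : f w = Ev (w - c) + Od (w - c) := by
    simp only [hEv, hOd, add_sub_cancel]; ring
  rw [h5]
  linear_combination -h4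

/-- Alternative form of the two-point Taylor expansion, with
`A_n = −z1·a_n(z1,z2) − z2·a_n(z2,z1)` and `B_n = a_n(z1,z2) + a_n(z2,z1)`. -/
theorem twoPointTaylor_alternative_form_tendsto
    (Ω : Set ℂ) (hΩ : IsOpen Ω) (f : ℂ → ℂ) (hf : DifferentiableOn ℂ f Ω)
    (z1 z2 : ℂ) (hz1 : z1 ∈ Ω) (hz2 : z2 ∈ Ω) (h12 : z1 ≠ z2)
    (z : ℂ) (hz : z ∈ Ω)
    (r : ℝ) (hr : ‖(z - z1) * (z - z2)‖ < r)
    (hrΩ : ∀ w : ℂ, w ∉ Ω → r ≤ ‖(w - z1) * (w - z2)‖)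
    (A B : ℕ → ℂ)
    (hA : ∀ n, A n = -z1 * twoPointCoeff f z1 z2 n - z2 * twoPointCoeff f z2 z1 n)
    (hB : ∀ n, B n = twoPointCoeff f z1 z2 n + twoPointCoeff f z2 z1 n) :
    Filter.Tendsto
      (fun N : ℕ => ∑ n ∈ Finset.range N,
        (A n + B n * z) * ((z - z1) * (z - z2)) ^ n)
      Filter.atTop (nhds (f z)) := by
  obtain ⟨Ah, Bh, hAh, hBh, hAB⟩ := exists_AB Ω hΩ f hf z1 z2 r hrΩ
  have hr0 : 0 < r := (norm_nonneg _).trans_lt hr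
  have hA0 : AnalyticAt ℂ Ah 0 := hAh.analyticAt (Metric.ball_mem_nhds 0 hr0)
  have hB0 : AnalyticAt ℂ Bh 0 := hBh.analyticAt (Metric.ball_mem_nhds 0 hr0)
  have hcoef : ∀ n, twoPointCoeff f z1 z2 n =
        (PowerSeries.coeff n (tps Ah 0) + z2 * PowerSeries.coeff n (tps Bh 0)) / (z2 - z1) ∧
      twoPointCoeff f z2 z1 n =
        (PowerSeries.coeff n (tps Ah 0) + z1 * PowerSeries.coeff n (tps Bh 0)) / (z1 - z2) := by
    intro n
    have he : z2 - z1 ≠ 0 := sub_ne_zero.2 h12.symm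
    have hd : z1 - z2 ≠ 0 := sub_ne_zero.2 h12
    obtain ⟨ga, hga, hgau⟩ := exists_taylor_rem (n + 1) Ah hA0
    obtain ⟨gb, hgb, hgbu⟩ := exists_taylor_rem (n + 1) Bh hB0
    set a := fun m => PowerSeries.coeff m (tps Ah 0) with ha
    set b := fun m => PowerSeries.coeff m (tps Bh 0) with hb
    set g : ℂ → ℂ := fun w => ga ((w - z1) * (w - z2)) + gb ((w - z1) * (w - z2)) * w with hg
    have hgan : ∀ x, (x - z1) * (x - z2) = 0 → AnalyticAt ℂ g x := by
      intro x hx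
      have hP : AnalyticAt ℂ (fun w : ℂ => (w - z1) * (w - z2)) x := by fun_prop
      have h1 : AnalyticAt ℂ (fun w => ga ((w - z1) * (w - z2))) x :=
        AnalyticAt.comp (g := ga) (f := fun w : ℂ => (w - z1) * (w - z2)) (by rw [hx]; exact hga) hP
      have h2 : AnalyticAt ℂ (fun w => gb ((w - z1) * (w - z2))) x :=
        AnalyticAt.comp (g := gb) (f := fun w : ℂ => (w - z1) * (w - z2)) (by rw [hx]; exact hgb) hP
      exact h1.fun_add (h2.fun_mul analyticAt_id)
    have hnear : ∀ x, (x - z1) * (x - z2) = 0 → ∀ᶠ w in nhds x, f w =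
        ∑ m ∈ Finset.range (n + 1), (a m + b m * w) * ((w - z1) * (w - z2)) ^ m
          + ((w - z1) * (w - z2)) ^ (n + 1) * g w := by
      intro x hx
      have hc : ContinuousAt (fun w : ℂ => ‖(w - z1) * (w - z2)‖) x := by fun_prop
      have : ∀ᶠ w in nhds x, ‖(w - z1) * (w - z2)‖ < r :=
        hc.eventually_lt continuousAt_const (by simpa [hx] using hr0)
      filter_upwards [this] with w hw
      rw [hAB w hw, hgau, hgbu, hg]
      simp only [add_mul, Finset.sum_add_distrib, Finset.sum_mul]
      have hs : ∀ m, b m * ((w - z1) * (w - z2)) ^ m * w = b m * w * ((w - z1) * (w - z2)) ^ m :=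
        fun m => by ring
      simp only [← hs]
      simp only [ha, hb]
      ring
    have p1 : (z1 - z1) * (z1 - z2) = 0 := by ring
    have p2 : (z2 - z1) * (z2 - z2) = 0 := by ring
    constructor
    · refine twoPointCoeff_of_expansion f g z1 z2 h12 n (fun m => (a m + z2 * b m) / (z2 - z1))
        (fun m => (a m + z1 * b m) / (z1 - z2)) (hgan z1 p1) (hgan z2 p2) _ rfl ?_ ?_
      all_goals
        first
          | filter_upwards [hnear z1 p1] with w hw
          | filter_upwards [hnear z2 p2] with w hw
        rw [hw]
        congr 1
        refine Finset.sum_congr rfl fun m _ => ?_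
        congr 1
        rw [show z2 - z1 = -(z1 - z2) by ring]
        field_simp
        ring
    · refine twoPointCoeff_of_expansion f g z2 z1 h12.symm n (fun m => (a m + z1 * b m) / (z1 - z2))
        (fun m => (a m + z2 * b m) / (z2 - z1)) (hgan z2 p2) (hgan z1 p1) _ rfl ?_ ?_
      all_goals
        first
          | filter_upwards [hnear z1 p1] with w hw
          | filter_upwards [hnear z2 p2] with w hw
        rw [hw]
        simp only [mul_comm (w - z2) (w - z1)]
        congr 1
        refine Finset.sum_congr rfl fun m _ => ?_
        congr 1
        rw [show z2 - z1 = -(z1 - z2) by ring]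
        field_simp
        ring
  have hd : z1 - z2 ≠ 0 := sub_ne_zero.2 h12
  have hAn : ∀ n, A n = PowerSeries.coeff n (tps Ah 0) := by
    intro n
    rw [hA, (hcoef n).1, (hcoef n).2, show z2 - z1 = -(z1 - z2) by ring]
    field_simp
    ring
  have hBn : ∀ n, B n = PowerSeries.coeff n (tps Bh 0) := by
    intro n
    rw [hB, (hcoef n).1, (hcoef n).2, show z2 - z1 = -(z1 - z2) by ring]
    field_simp
    ring
  have hu : (z - z1) * (z - z2) ∈ Metric.ball (0 : ℂ) r := by simpa using hr
  have s1 := Complex.hasSum_taylorSeries_on_ball hAh hu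
  have s2 := (Complex.hasSum_taylorSeries_on_ball hBh hu).mul_right z
  have s3 := (s1.add s2).tendsto_sum_nat
  rw [← hAB z hr] at s3
  refine s3.congr fun N => Finset.sum_congr rfl fun n _ => ?_
  rw [hAn, hBn]
  simp only [tps, PowerSeries.coeff_mk, sub_zero, smul_eq_mul]
  ring
end

section
/- Let Ω ⊆ ℂ be open, z1, z2 ∈ Ω with z1 ≠ z2, m1, m2 ≥ 1 natural numbers, and let h : ℂ → ℂ be analytic on Ω. Define f(z) = h(z)/((z−z1)^{m1}(z−z2)^{m2}) for z ∈ Ω \ {z1, z2}, and set g1(z) = h(z)/(z−z2)^{m2} (so g1 is analytic near z1 and g1 = (z−z1)^{m1} f) and g2(z) = h(z)/(z−z1)^{m1} (analytic near z2, g2 = (z−z2)^{m2} f). Let z ∈ Ω with z ≠ z1, z ≠ z2, and suppose there exists r > |(z−z1)(z−z2)| such that |(w−z1)(w−z2)| ≥ r for every w ∈ ℂ \ Ω. Then f(z) = Σ_{n=0}^{∞} [b_n(z1,z2)(z−z1) + b_n(z2,z1)(z−z2)]·((z−z1)(z−z2))^n + Σ_{n=0}^{∞} [c_n(z1,z2)(z−z1)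 + c_n(z2,z1)(z−z2)]·((z−z1)(z−z2))^{−n−1}, where both series converge (the second has only finitely many nonzero terms). -/
/-- The two-point Laurent coefficient `b_n(z1,z2)` expressed through `g1` (analytic near `z1`,
with `g1 = (z−z1)^{m1} f`) and `g2` (analytic near `z2`, with `g2 = (z−z2)^{m2} f`).
Here `(a)_k` is the Pochhammer symbol `ascPochhammer`. -/
noncomputable def twoPointLaurentB (g1 g2 : ℂ → ℂ) (z1 z2 : ℂ) (m1 m2 : ℕ) (n : ℕ) : ℂ :=
  (∑ k ∈ Finset.range (n + m1),
      (Nat.choose (n + m1 - 1) k : ℂ) * (-1 : ℂ) ^ (k + 1) *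
        Polynomial.eval ((n : ℂ) + 1) (ascPochhammer ℂ k) *
        iteratedDeriv (n + m1 - k - 1) g1 z1 /
        ((Nat.factorial (n + m1 - 1) : ℂ) * (z1 - z2) ^ (n + k + 2)))
  + (∑ k ∈ Finset.range (n + m2 + 1),
      (Nat.choose (n + m2) k : ℂ) * (-1 : ℂ) ^ k *
        Polynomial.eval (n : ℂ) (ascPochhammer ℂ k) *
        iteratedDeriv (n + m2 - k) g2 z2 /
        ((Nat.factorial (n + m2) : ℂ) * (z2 - z1) ^ (n + k + 1)))

/-- The two-point Laurent coefficient `c_n(z1,z2)`; empty sums (negative upper limit)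
are zero, which is automatic from `Finset.range` with truncated subtraction. -/
noncomputable def twoPointLaurentC (g1 g2 : ℂ → ℂ) (z1 z2 : ℂ) (m1 m2 : ℕ) (n : ℕ) : ℂ :=
  -(∑ k ∈ Finset.range (m1 - n - 1),
      (Nat.factorial k : ℂ) * (Nat.choose (m1 - n - 2) k : ℂ) * (Nat.choose n k : ℂ) *
        (z1 - z2) ^ ((n : ℤ) - k - 1) *
        iteratedDeriv (m1 - n - k - 2) g1 z1 / (Nat.factorial (m1 - n - 2) : ℂ))
  + (∑ k ∈ Finset.range (m2 - n),
      (Nat.factorial k : ℂ) * (Nat.choose (m2 - n - 1) k : ℂ) * (Nat.choose (n + 1) k : ℂ) *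
        (z2 - z1) ^ ((n : ℤ) - k) *
        iteratedDeriv (m2 - n - k - 1) g2 z2 / (Nat.factorial (m2 - n - 1) : ℂ))


/-- Taylor coefficient with integer index. -/
noncomputable def tzc (j : ℤ) (F : ℂ → ℂ) (a : ℂ) : ℂ :=
  if j < 0 then 0 else iteratedDeriv j.toNat F a / (Nat.factorial j.toNat : ℂ)

lemma tzc_nat (n : ℕ) (F : ℂ → ℂ) (a : ℂ) :
    tzc (n : ℤ) F a = iteratedDeriv n F a / (Nat.factorial n : ℂ) := by
  simp [tzc]

lemma tzc_neg {j : ℤ} (hj : j < 0) (F : ℂ → ℂ) (a : ℂ) : tzc j F a = 0 := by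
  simp [tzc, hj]

lemma tzc_congr (j : ℤ) {F G : ℂ → ℂ} {a : ℂ} (h : F =ᶠ[nhds a] G) : tzc j F a = tzc j G a := by
  simp [tzc, h.iteratedDeriv_eq]

lemma tzc_add (j : ℤ) {F G : ℂ → ℂ} {a : ℂ} (hF : AnalyticAt ℂ F a) (hG : AnalyticAt ℂ G a) :
    tzc j (fun w => F w + G w) a = tzc j F a + tzc j G a := by
  unfold tzc
  split_ifs
  · simp
  · rw [iteratedDeriv_fun_add hF.contDiffAt hG.contDiffAt, add_div]

lemma tzc_const_mul (j : ℤ) (c : ℂ) (F : ℂ → ℂ) (a : ℂ) :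
    tzc j (fun w => c * F w) a = c * tzc j F a := by
  unfold tzc
  split_ifs
  · simp
  · rw [iteratedDeriv_const_mul_field, mul_div_assoc]

lemma iteratedDeriv_sub_const_self (a : ℂ) (i : ℕ) :
    iteratedDeriv i (fun w : ℂ => w - a) a = if i = 1 then 1 else 0 := by
  rw [iteratedDeriv_comp_sub_const i (fun w : ℂ => w) a]
  have := iteratedDeriv_fun_pow_zero (𝕜 := ℂ) (n := i) (m := 1)
  simpa using this

lemma tzc_mul (j : ℤ) {F : ℂ → ℂ} {a : ℂ} (hF : AnalyticAt ℂ F a) :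
    tzc j (fun w => (w - a) * F w) a = tzc (j - 1) F a := by
  rcases lt_or_ge j 0 with hj | hj
  · rw [tzc_neg hj, tzc_neg (by omega)]
  lift j to ℕ using hj
  rcases j with _ | n
  · rw [tzc_neg (j := ((0 : ℕ) : ℤ) - 1) (by simp), tzc_nat]; simp
  · have : (((n + 1 : ℕ) : ℤ) - 1) = (n : ℤ) := by push_cast; ring
    rw [this, tzc_nat, tzc_nat, iteratedDeriv_fun_mul (by fun_prop) hF.contDiffAt]
    rw [Finset.sum_eq_single 1]
    · rw [iteratedDeriv_sub_const_self]
      simp [Nat.factorial_succ]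
      have h1 : (n : ℂ) + 1 ≠ 0 := by exact_mod_cast Nat.succ_ne_zero n
      have h2 : (Nat.factorial n : ℂ) ≠ 0 := by exact_mod_cast Nat.factorial_ne_zero n
      field_simp
    · intro b _ hb
      rw [iteratedDeriv_sub_const_self]; simp [hb]
    · intro h; simp at h

lemma tzc_mul_pow (j : ℤ) (m : ℕ) {F : ℂ → ℂ} {a : ℂ} (hF : AnalyticAt ℂ F a) :
    tzc j (fun w => (w - a) ^ m * F w) a = tzc (j - m) F a := by
  induction m generalizing j with
  | zero => simp
  | succ m ih =>
    have : (fun w => (w - a) ^ (m + 1) * F w) = fun w => (w - a) * ((w - a) ^ m * F w) := by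
      funext w; ring
    rw [this, tzc_mul j (by fun_prop), ih]
    congr 1; push_cast; ring

lemma iteratedDeriv_sub_zpow (e : ℤ) (k : ℕ) (a b : ℂ) :
    iteratedDeriv k (fun w : ℂ => (w - b) ^ e) a
      = (∏ i ∈ Finset.range k, ((e : ℂ) - i)) * (a - b) ^ (e - k) := by
  rw [iteratedDeriv_comp_sub_const k (fun w : ℂ => w ^ e) b, iteratedDeriv_eq_iterate]
  exact iter_deriv_zpow e (a - b) k

lemma analyticAt_sub_zpow (e : ℤ) {a b : ℂ} (h : a ≠ b) :
    AnalyticAt ℂ (fun w : ℂ => (w - b) ^ e) a :=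
  (analyticAt_id.sub analyticAt_const).zpow (sub_ne_zero.2 h)

lemma prod_neg_asc (n k : ℕ) :
    ∏ i ∈ Finset.range k, (((-(n : ℤ) : ℤ) : ℂ) - i)
      = (-1) ^ k * Polynomial.eval (n : ℂ) (ascPochhammer ℂ k) := by
  induction k with
  | zero => simp
  | succ k ih =>
    rw [Finset.prod_range_succ, ih, ascPochhammer_succ_eval]
    push_cast; ring

lemma prod_desc (n k : ℕ) :
    ∏ i ∈ Finset.range k, (((n : ℤ) : ℂ) - i)
      = (Nat.factorial k : ℂ) * (Nat.choose n k : ℂ) := by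
  rw [← Nat.cast_mul, ← Nat.descFactorial_eq_factorial_mul_choose]
  induction k with
  | zero => simp
  | succ k ih =>
    rw [Finset.prod_range_succ, ih, Nat.descFactorial_succ]
    rcases le_or_gt k n with h | h
    · push_cast [Nat.cast_sub h]; ring
    · simp [Nat.descFactorial_eq_zero_iff_lt.2 h]

lemma tzc_zpow (p k : ℕ) (a b : ℂ) :
    tzc (k : ℤ) (fun w : ℂ => (w - b) ^ (-((p + 1 : ℕ) : ℤ))) a
      = (-1) ^ k * (Nat.choose (p + k) k : ℂ) * (a - b) ^ (-((p + 1 + k : ℕ) : ℤ)) := by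
  rw [tzc_nat, iteratedDeriv_sub_zpow, prod_neg_asc]
  have h1 : Polynomial.eval (((p + 1 : ℕ)) : ℂ) (ascPochhammer ℂ k)
      = (Nat.factorial k : ℂ) * (Nat.choose (p + k) k : ℂ) := by
    rw [← Nat.cast_mul, ← ascPochhammer_eval_cast, ascPochhammer_nat_eq_ascFactorial,
      Nat.ascFactorial_eq_factorial_mul_choose]
  rw [h1]
  have h2 : (Nat.factorial k : ℂ) ≠ 0 := by exact_mod_cast Nat.factorial_ne_zero k
  have h3 : (-((p + 1 : ℕ) : ℤ) - (k : ℤ)) = -((p + 1 + k : ℕ) : ℤ) := by push_cast; ring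
  rw [h3]
  field_simp

lemma tzc_mul_zpow (N : ℕ) (e : ℤ) {g : ℂ → ℂ} {a b : ℂ} (hg : AnalyticAt ℂ g a) (h : a ≠ b) :
    tzc (N : ℤ) (fun w => g w * (w - b) ^ e) a
      = ∑ k ∈ Finset.range (N + 1), (Nat.choose N k : ℂ) *
          ((∏ i ∈ Finset.range k, ((e : ℂ) - i)) * (a - b) ^ (e - k)) *
          iteratedDeriv (N - k) g a / (Nat.factorial N : ℂ) := by
  have : (fun w => g w * (w - b) ^ e) = fun w => (w - b) ^ e * g w := by funext w; ring
  rw [this, tzc_nat, iteratedDeriv_fun_mul (analyticAt_sub_zpow e h).contDiffAt hg.contDiffAt,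
    Finset.sum_div]
  refine Finset.sum_congr rfl fun k _ => ?_
  rw [iteratedDeriv_sub_zpow]

/-- Unified coefficient. -/
noncomputable def xco (e : ℤ) (g1 g2 : ℂ → ℂ) (z1 z2 : ℂ) (m1 m2 : ℕ) : ℂ :=
  (tzc (e + m1 - 1) (fun w => g1 w * (w - z2) ^ (-e - 1)) z1
    + tzc (e + m2) (fun w => g2 w * (w - z1) ^ (-e)) z2) / (z2 - z1)

lemma B_eq_xco {g1 g2 : ℂ → ℂ} {z1 z2 : ℂ} (h12 : z1 ≠ z2) {m1 m2 : ℕ} (hm1 : 1 ≤ m1)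
    (hg1 : AnalyticAt ℂ g1 z1) (hg2 : AnalyticAt ℂ g2 z2) (n : ℕ) :
    twoPointLaurentB g1 g2 z1 z2 m1 m2 n = xco n g1 g2 z1 z2 m1 m2 := by
  have hd : z1 - z2 ≠ 0 := sub_ne_zero.2 h12
  have hd' : z2 - z1 ≠ 0 := sub_ne_zero.2 h12.symm
  obtain ⟨m, rfl⟩ : ∃ m, m1 = m + 1 := ⟨m1 - 1, by omega⟩
  unfold twoPointLaurentB xco
  have e1 : (n : ℤ) + ((m + 1 : ℕ) : ℤ) - 1 = ((n + m : ℕ) : ℤ) := by push_cast; ring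
  have e2 : (n : ℤ) + (m2 : ℤ) = ((n + m2 : ℕ) : ℤ) := by push_cast; ring
  rw [e1, e2, tzc_mul_zpow _ _ hg1 h12, tzc_mul_zpow _ _ hg2 h12.symm, add_div,
    Finset.sum_div, Finset.sum_div]
  congr 1
  · refine Finset.sum_congr (by congr 1) fun k _ => ?_
    have e3 : -(n : ℤ) - 1 = -((n + 1 : ℕ) : ℤ) := by push_cast; ring
    rw [e3, prod_neg_asc]
    have e4 : (-((n + 1 : ℕ) : ℤ) - (k : ℤ)) = -((n + 1 + k : ℕ) : ℤ) := by push_cast; ring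
    have e5 : n + (m + 1) - k - 1 = n + m - k := by omega
    have e6 : n + (m + 1) - 1 = n + m := by omega
    have e7 : z2 - z1 = -(z1 - z2) := by ring
    rw [e4, e5, e6, zpow_neg, zpow_natCast, e7]
    have h2 : (Nat.factorial (n + m) : ℂ) ≠ 0 := by exact_mod_cast Nat.factorial_ne_zero _
    push_cast
    field_simp
    ring
  · refine Finset.sum_congr rfl fun k _ => ?_
    rw [prod_neg_asc]
    have e4 : (-(n : ℤ) - (k : ℤ)) = -((n + k : ℕ) : ℤ) := by push_cast; ring
    rw [e4, zpow_neg, zpow_natCast]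
    have h2 : (Nat.factorial (n + m2) : ℂ) ≠ 0 := by exact_mod_cast Nat.factorial_ne_zero _
    field_simp
    try ring

lemma C_eq_xco {g1 g2 : ℂ → ℂ} {z1 z2 : ℂ} (h12 : z1 ≠ z2) {m1 m2 : ℕ}
    (hg1 : AnalyticAt ℂ g1 z1) (hg2 : AnalyticAt ℂ g2 z2) (n : ℕ) :
    twoPointLaurentC g1 g2 z1 z2 m1 m2 n = xco (-(n : ℤ) - 1) g1 g2 z1 z2 m1 m2 := by
  have hd : z1 - z2 ≠ 0 := sub_ne_zero.2 h12
  have hd' : z2 - z1 ≠ 0 := sub_ne_zero.2 h12.symm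
  unfold twoPointLaurentC xco
  rw [add_div]
  congr 1
  · have e0 : -(-(n : ℤ) - 1) - 1 = n := by ring
    rw [e0]
    rcases lt_or_ge m1 (n + 2) with h | h
    · have : m1 - n - 1 = 0 := by omega
      rw [this, tzc_neg (by omega)]; simp
    · obtain ⟨N, rfl⟩ := Nat.exists_eq_add_of_le h
      have e1 : -(n : ℤ) - 1 + ((n + 2 + N : ℕ) : ℤ) - 1 = (N : ℤ) := by push_cast; ring
      have e2 : n + 2 + N - n - 1 = N + 1 := by omega
      have e3 : n + 2 + N - n - 2 = N := by omega
      rw [e1, tzc_mul_zpow _ _ hg1 h12, e2, e3, Finset.sum_div, ← Finset.sum_neg_distrib]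
      refine Finset.sum_congr rfl fun k _ => ?_
      have e5 : n + 2 + N - n - k - 2 = N - k := by omega
      have e7 : z2 - z1 = -(z1 - z2) := by ring
      rw [prod_desc, e5, zpow_sub_one₀ hd, e7]
      field_simp
  · have e0 : -(-(n : ℤ) - 1) = ((n + 1 : ℕ) : ℤ) := by push_cast; ring
    rw [e0]
    rcases lt_or_ge m2 (n + 1) with h | h
    · have : m2 - n = 0 := by omega
      rw [this, tzc_neg (by omega)]; simp
    · obtain ⟨N, rfl⟩ := Nat.exists_eq_add_of_le h
      have e1 : -(n : ℤ) - 1 + ((n + 1 + N : ℕ) : ℤ) = (N : ℤ) := by push_cast; ring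
      have e2 : n + 1 + N - n = N + 1 := by omega
      have e3 : N + 1 - 1 = N := by omega
      rw [e1, tzc_mul_zpow _ _ hg2 h12.symm, e2, e3, Finset.sum_div]
      refine Finset.sum_congr rfl fun k _ => ?_
      have e5 : N + 1 - k - 1 = N - k := by omega
      have e6 : ((n + 1 : ℕ) : ℤ) - (k : ℤ) = ((n : ℤ) - k) + 1 := by push_cast; ring
      rw [prod_desc, e5, e6, zpow_add_one₀ hd']
      field_simp

lemma xco_shift (e : ℤ) {H : ℂ → ℂ} {z1 z2 : ℂ} (h12 : z1 ≠ z2)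
    (h1 : AnalyticAt ℂ H z1) (h2 : AnalyticAt ℂ H z2) :
    xco e (fun w => (w - z1) * (w - z2) * H w) (fun w => (w - z1) * (w - z2) * H w) z1 z2 0 0
      = xco (e - 1) H H z1 z2 0 0 := by
  unfold xco
  congr 2
  · rw [tzc_congr (G := fun w => (w - z1) * (H w * (w - z2) ^ (-(e - 1) - 1))),
      tzc_mul _ (h1.fun_mul (analyticAt_sub_zpow _ h12))]
    · congr 1; push_cast; ring
    · filter_upwards [isOpen_ne.mem_nhds h12] with w hw
      have hw' : w - z2 ≠ 0 := sub_ne_zero.2 hw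
      have : -(e - 1) - 1 = (-e - 1) + 1 := by ring
      rw [this, zpow_add_one₀ hw']; ring
  · rw [tzc_congr (G := fun w => (w - z2) * (H w * (w - z1) ^ (-(e - 1)))),
      tzc_mul _ (h2.fun_mul (analyticAt_sub_zpow _ h12.symm))]
    · congr 1; push_cast; ring
    · filter_upwards [isOpen_ne.mem_nhds h12.symm] with w hw
      have hw' : w - z1 ≠ 0 := sub_ne_zero.2 hw
      have : -(e - 1) = (-e) + 1 := by ring
      rw [this, zpow_add_one₀ hw']; ring

lemma neg_sub_zpow_odd (a b : ℂ) (j : ℕ) :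
    (b - a) ^ (-((2 * j + 1 : ℕ) : ℤ)) = -(a - b) ^ (-((2 * j + 1 : ℕ) : ℤ)) := by
  have : b - a = -(a - b) := by ring
  rw [zpow_neg, zpow_neg, zpow_natCast, zpow_natCast, this, Odd.neg_pow ⟨j, rfl⟩, inv_neg]

lemma xco_sub1 (n : ℕ) {z1 z2 : ℂ} (h12 : z1 ≠ z2) :
    xco ((n + 1 : ℕ) : ℤ) (fun w => w - z1) (fun w => w - z1) z1 z2 0 0 = 0 := by
  unfold xco
  rw [tzc_mul _ (analyticAt_sub_zpow _ h12)]
  rw [tzc_congr (F := fun w => (w - z1) * (w - z1) ^ (-((n + 1 : ℕ) : ℤ)))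
    (G := fun w => (w - z1) ^ (-(n : ℤ)))]
  swap
  · filter_upwards [isOpen_ne.mem_nhds h12.symm] with w hw
    have hw' : w - z1 ≠ 0 := sub_ne_zero.2 hw
    have : -(n : ℤ) = -((n + 1 : ℕ) : ℤ) + 1 := by push_cast; ring
    rw [this, zpow_add_one₀ hw']; ring
  rcases n with _ | p
  · rw [tzc_neg (by simp)]
    have : (((0 + 1 : ℕ) : ℤ) + ((0 : ℕ) : ℤ)) = ((1 : ℕ) : ℤ) := by simp
    rw [this, tzc_nat]
    simp
  · have e1 : (((p + 1 + 1 : ℕ) : ℤ) + ((0 : ℕ) : ℤ) - 1 - 1) = (p : ℤ) := by push_cast; ring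
    have e2 : (((p + 1 + 1 : ℕ) : ℤ) + ((0 : ℕ) : ℤ)) = ((p + 2 : ℕ) : ℤ) := by push_cast; ring
    have e3 : (-((p + 1 + 1 : ℕ) : ℤ) - 1) = -((p + 2 + 1 : ℕ) : ℤ) := by push_cast; ring
    rw [e1, e2, e3, tzc_zpow, tzc_zpow]
    have e4 : p + 2 + 1 + p = 2 * (p + 1) + 1 := by ring
    have e5 : p + 1 + (p + 2) = 2 * (p + 1) + 1 := by ring
    have e6 : (p + (p + 2)).choose (p + 2) = (p + 2 + p).choose p := by
      rw [add_comm p (p + 2)]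
      exact (Nat.choose_symm_add).symm ▸ rfl
    rw [e4, e5, e6, neg_sub_zpow_odd z1 z2]
    ring

lemma xco_sub2 (n : ℕ) {z1 z2 : ℂ} (h12 : z1 ≠ z2) :
    xco ((n + 1 : ℕ) : ℤ) (fun w => w - z2) (fun w => w - z2) z1 z2 0 0 = 0 := by
  unfold xco
  rw [tzc_mul _ (analyticAt_sub_zpow _ h12.symm)]
  rw [tzc_congr (F := fun w => (w - z2) * (w - z2) ^ (-((n + 1 : ℕ) : ℤ) - 1))
    (G := fun w => (w - z2) ^ (-((n + 1 : ℕ) : ℤ)))]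
  swap
  · filter_upwards [isOpen_ne.mem_nhds h12] with w hw
    have hw' : w - z2 ≠ 0 := sub_ne_zero.2 hw
    rw [zpow_sub_one₀ hw']; field_simp
  have e1 : (((n + 1 : ℕ) : ℤ) + ((0 : ℕ) : ℤ) - 1) = (n : ℤ) := by push_cast; ring
  rw [e1, tzc_zpow, tzc_zpow]
  have e4 : n + 1 + n = 2 * n + 1 := by ring
  rw [e4, neg_sub_zpow_odd z1 z2]
  ring

lemma xco_lin (e : ℤ) {F G K : ℂ → ℂ} {z1 z2 : ℂ} (h12 : z1 ≠ z2) (a b : ℂ)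
    (hF1 : AnalyticAt ℂ F z1) (hF2 : AnalyticAt ℂ F z2)
    (hG1 : AnalyticAt ℂ G z1) (hG2 : AnalyticAt ℂ G z2)
    (hK1 : AnalyticAt ℂ K z1) (hK2 : AnalyticAt ℂ K z2) :
    xco e (fun w => a * F w + b * G w + K w) (fun w => a * F w + b * G w + K w) z1 z2 0 0
      = a * xco e F F z1 z2 0 0 + b * xco e G G z1 z2 0 0 + xco e K K z1 z2 0 0 := by
  have key : ∀ (j k : ℤ) (x y : ℂ), x ≠ y → AnalyticAt ℂ F x → AnalyticAt ℂ G x →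
      AnalyticAt ℂ K x → tzc j (fun w => (a * F w + b * G w + K w) * (w - y) ^ k) x
      = a * tzc j (fun w => F w * (w - y) ^ k) x + b * tzc j (fun w => G w * (w - y) ^ k) x
        + tzc j (fun w => K w * (w - y) ^ k) x := by
    intro j k x y hxy hF hG hK
    have hz := analyticAt_sub_zpow k hxy
    have : (fun w => (a * F w + b * G w + K w) * (w - y) ^ k)
        = fun w => (a * (F w * (w - y) ^ k) + b * (G w * (w - y) ^ k)) + K w * (w - y) ^ k := by
      funext w; ring
    rw [this, tzc_add _ (F := fun w => a * (F w * (w - y) ^ k) + b * (G w * (w - y) ^ k))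
      ((analyticAt_const.fun_mul (hF.fun_mul hz)).fun_add (analyticAt_const.fun_mul (hG.fun_mul hz))) (hK.fun_mul hz),
      tzc_add _ (F := fun w => a * (F w * (w - y) ^ k)) (analyticAt_const.fun_mul (hF.fun_mul hz))
        (analyticAt_const.fun_mul (hG.fun_mul hz)), tzc_const_mul, tzc_const_mul]
  unfold xco
  rw [key _ _ _ _ h12 hF1 hG1 hK1, key _ _ _ _ h12.symm hF2 hG2 hK2]
  ring

lemma analyticAt_dslope_zero {A : ℂ → ℂ} (hA : AnalyticAt ℂ A 0) :
    AnalyticAt ℂ (dslope A 0) 0 := by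
  obtain ⟨p, hp⟩ := hA
  exact ⟨_, hp.has_fpower_series_dslope_fslope⟩

lemma eq_add_dslope (A : ℂ → ℂ) (u : ℂ) : A u = A 0 + u * dslope A 0 u := by
  have := sub_smul_dslope A 0 u
  simp only [sub_zero, smul_eq_mul] at this
  rw [this]; ring

lemma tzc_dslope {A : ℂ → ℂ} (hA : AnalyticAt ℂ A 0) (n : ℕ) :
    tzc ((n + 1 : ℕ) : ℤ) A 0 = tzc (n : ℤ) (dslope A 0) 0 := by
  have h := analyticAt_dslope_zero hA
  have e : A = fun u => A 0 + (u - 0) * dslope A 0 u := by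
    funext u; rw [sub_zero]; exact eq_add_dslope A u
  have e1 : tzc ((n + 1 : ℕ) : ℤ) A 0
      = tzc ((n + 1 : ℕ) : ℤ) (fun u => A 0 + (u - 0) * dslope A 0 u) 0 := by
    rw [← e]
  rw [e1, tzc_add _ analyticAt_const
    (AnalyticAt.fun_mul (f := fun u : ℂ => u - 0) (by fun_prop) h), tzc_mul _ h,
    tzc_nat, iteratedDeriv_const]
  simp

lemma xco_main {z1 z2 : ℂ} (h12 : z1 ≠ z2) (n : ℕ) : ∀ {A B : ℂ → ℂ},
    AnalyticAt ℂ A 0 → AnalyticAt ℂ B 0 →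
    xco (n : ℤ)
      (fun w => A ((w - z1) * (w - z2)) * (w - z1) + B ((w - z1) * (w - z2)) * (w - z2))
      (fun w => A ((w - z1) * (w - z2)) * (w - z1) + B ((w - z1) * (w - z2)) * (w - z2))
      z1 z2 0 0 = tzc (n : ℤ) A 0 := by
  have hd' : z2 - z1 ≠ 0 := sub_ne_zero.2 h12.symm
  have hcomp : ∀ {A B : ℂ → ℂ} (x : ℂ), (x - z1) * (x - z2) = 0 →
      AnalyticAt ℂ A 0 → AnalyticAt ℂ B 0 → AnalyticAt ℂ
      (fun w => A ((w - z1) * (w - z2)) * (w - z1) + B ((w - z1) * (w - z2)) * (w - z2)) x := by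
    intro A B x hx hA hB
    have hP : AnalyticAt ℂ (fun w : ℂ => (w - z1) * (w - z2)) x := by fun_prop
    have hA' : AnalyticAt ℂ (fun w => A ((w - z1) * (w - z2))) x :=
      AnalyticAt.fun_comp (by rw [hx]; exact hA) hP
    have hB' : AnalyticAt ℂ (fun w => B ((w - z1) * (w - z2))) x :=
      AnalyticAt.fun_comp (by rw [hx]; exact hB) hP
    exact (hA'.fun_mul (by fun_prop)).fun_add (hB'.fun_mul (by fun_prop))
  induction n with
  | zero =>
    intro A B hA hB
    unfold xco
    rw [tzc_neg (by simp)]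
    have : (((0 : ℕ) : ℤ) + ((0 : ℕ) : ℤ)) = ((0 : ℕ) : ℤ) := by simp
    rw [this, tzc_nat, tzc_nat]
    simp
    field_simp
  | succ n ih =>
    intro A B hA hB
    have hA1 := analyticAt_dslope_zero hA
    have hB1 := analyticAt_dslope_zero hB
    have e : (fun w => A ((w - z1) * (w - z2)) * (w - z1) + B ((w - z1) * (w - z2)) * (w - z2))
      = fun w => A 0 * (w - z1) + B 0 * (w - z2) + (w - z1) * (w - z2) *
        (dslope A 0 ((w - z1) * (w - z2)) * (w - z1)
          + dslope B 0 ((w - z1) * (w - z2)) * (w - z2)) := by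
      funext w
      rw [eq_add_dslope A, eq_add_dslope B]
      ring
    have k1 := hcomp z1 (by simp) hA1 hB1
    have k2 := hcomp z2 (by simp) hA1 hB1
    rw [e, xco_lin _ (F := fun w => w - z1) (G := fun w => w - z2) h12 _ _ (by fun_prop)
      (by fun_prop) (by fun_prop) (by fun_prop) (by fun_prop) (by fun_prop),
      xco_sub1 _ h12, xco_sub2 _ h12, xco_shift _ h12 k1 k2]
    have e1 : (((n + 1 : ℕ) : ℤ) - 1) = (n : ℤ) := by push_cast; ring
    rw [e1, ih hA1 hB1, tzc_dslope hA]
    ring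

lemma xco_reduce (e : ℤ) {h g1 g2 : ℂ → ℂ} {z1 z2 : ℂ} (h12 : z1 ≠ z2) (m1 m2 : ℕ)
    (hg1def : ∀ w, g1 w = h w / (w - z2) ^ m2)
    (hg2def : ∀ w, g2 w = h w / (w - z1) ^ m1)
    (hg1 : AnalyticAt ℂ g1 z1) (hg2 : AnalyticAt ℂ g2 z2)
    {H : ℂ → ℂ} (hH1 : H =ᶠ[nhds z1] fun w => h w * (w - z1) ^ m2 * (w - z2) ^ m1)
    (hH2 : H =ᶠ[nhds z2] fun w => h w * (w - z1) ^ m2 * (w - z2) ^ m1) :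
    xco e H H z1 z2 0 0 = xco (e - m1 - m2) g1 g2 z1 z2 m1 m2 := by
  unfold xco
  congr 2
  · rw [tzc_congr (G := fun w => (w - z1) ^ m2 * (g1 w * (w - z2) ^ (-(e - m1 - m2) - 1))),
      tzc_mul_pow _ _ (hg1.fun_mul (analyticAt_sub_zpow _ h12))]
    · congr 1; push_cast; ring
    · filter_upwards [isOpen_ne.mem_nhds h12, hH1] with w hw hw2
      have hw' : w - z2 ≠ 0 := sub_ne_zero.2 hw
      have : -(e - m1 - m2) - 1 = (-e - 1) + (m1 : ℤ) + (m2 : ℤ) := by ring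
      rw [hw2, hg1def, this, zpow_add₀ hw', zpow_add₀ hw', zpow_natCast, zpow_natCast]
      field_simp
  · rw [tzc_congr (G := fun w => (w - z2) ^ m1 * (g2 w * (w - z1) ^ (-(e - m1 - m2)))),
      tzc_mul_pow _ _ (hg2.fun_mul (analyticAt_sub_zpow _ h12.symm))]
    · congr 1; push_cast; ring
    · filter_upwards [isOpen_ne.mem_nhds h12.symm, hH2] with w hw hw2
      have hw' : w - z1 ≠ 0 := sub_ne_zero.2 hw
      have : -(e - m1 - m2) = (-e) + (m1 : ℤ) + (m2 : ℤ) := by ring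
      rw [hw2, hg2def, this, zpow_add₀ hw', zpow_add₀ hw', zpow_natCast, zpow_natCast]
      field_simp

lemma even_factor {E : ℂ → ℂ} {d : ℂ} {r : ℝ}
    (hE : DifferentiableOn ℂ E {s | s ^ 2 ∈ Metric.ball d r}) (heven : ∀ s, E (-s) = E s) :
    ∃ A : ℂ → ℂ, DifferentiableOn ℂ A (Metric.ball d r) ∧ ∀ s, A (s ^ 2) = E s := by
  have hopen : IsOpen {s : ℂ | s ^ 2 ∈ Metric.ball d r} :=
    Metric.isOpen_ball.preimage (continuous_pow 2)
  have hsq : ∀ v : ℂ, (v ^ ((2 : ℂ)⁻¹)) ^ 2 = v := fun v => by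
    simp
  have hpm : ∀ s t : ℂ, s ^ 2 = t ^ 2 → E s = E t := by
    intro s t hst
    rcases sq_eq_sq_iff_eq_or_eq_neg.1 hst with h | h
    · rw [h]
    · rw [h, heven]
  have hdiffE : ∀ s : ℂ, s ^ 2 ∈ Metric.ball d r → DifferentiableAt ℂ E s := fun s hs =>
    hE.differentiableAt (hopen.mem_nhds hs)
  refine ⟨fun v => E (v ^ ((2 : ℂ)⁻¹)), ?_, fun s => hpm _ _ (hsq _)⟩
  have hne : ∀ v ∈ Metric.ball d r, v ≠ 0 →
      DifferentiableAt ℂ (fun v => E (v ^ ((2 : ℂ)⁻¹))) v := by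
    intro v hv hv0
    rcases Complex.mem_slitPlane_or_neg_mem_slitPlane hv0 with h | h
    · have h1 : DifferentiableAt ℂ (fun v : ℂ => v ^ ((2 : ℂ)⁻¹)) v :=
        differentiableAt_id.cpow_const h
      exact DifferentiableAt.comp (g := E) v (hdiffE _ (by rw [hsq]; exact hv)) h1
    · have h1 : DifferentiableAt ℂ (fun v : ℂ => Complex.I * (-v) ^ ((2 : ℂ)⁻¹)) v :=
        (differentiableAt_id.neg.cpow_const h).const_mul _
      have h3 : ∀ v : ℂ, (Complex.I * (-v) ^ ((2 : ℂ)⁻¹)) ^ 2 = v := by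
        intro v; rw [mul_pow, hsq, Complex.I_sq]; ring
      have h2 : (fun v => E (v ^ ((2 : ℂ)⁻¹)))
          = fun v => E (Complex.I * (-v) ^ ((2 : ℂ)⁻¹)) := by
        funext v
        exact hpm _ _ (by rw [hsq, h3])
      rw [h2]
      exact DifferentiableAt.comp (g := E) v (hdiffE _ (by rw [h3]; exact hv)) h1
  by_cases h0 : (0 : ℂ) ∈ Metric.ball d r
  · refine (Complex.differentiableOn_compl_singleton_and_continuousAt_iff
      (Metric.isOpen_ball.mem_nhds h0)).1 ⟨fun v hv => (hne v hv.1 hv.2).differentiableWithinAt, ?_⟩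
    have hc : ContinuousAt (fun v : ℂ => v ^ ((2 : ℂ)⁻¹)) 0 :=
      Complex.continuousAt_cpow_const_of_re_pos (by simp) (by norm_num)
    exact ContinuousAt.comp (g := E) (hdiffE _ (by rw [hsq]; exact h0)).continuousAt hc
  · exact fun v hv => (hne v hv (fun h => h0 (h ▸ hv))).differentiableWithinAt

lemma decomp {h : ℂ → ℂ} {z1 z2 : ℂ} (h12 : z1 ≠ z2) {r : ℝ}
    (hh : DifferentiableOn ℂ h {w | ‖(w - z1) * (w - z2)‖ < r}) :
    ∃ A B : ℂ → ℂ, DifferentiableOn ℂ A (Metric.ball 0 r) ∧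
      DifferentiableOn ℂ B (Metric.ball 0 r) ∧
      ∀ w, h w = A ((w - z1) * (w - z2)) * (w - z1) + B ((w - z1) * (w - z2)) * (w - z2) := by
  have hd' : z2 - z1 ≠ 0 := sub_ne_zero.2 h12.symm
  set c : ℂ := (z1 + z2) / 2 with hc
  set d : ℂ := ((z1 - z2) / 2) ^ 2 with hd
  have hP : ∀ s : ℂ, (c + s - z1) * (c + s - z2) = s ^ 2 - d := by
    intro s; rw [hc, hd]; ring
  have hopen : IsOpen {s : ℂ | s ^ 2 ∈ Metric.ball d r} :=
    Metric.isOpen_ball.preimage (continuous_pow 2)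
  have h1 : DifferentiableOn ℂ (fun s => h (c + s)) {s | s ^ 2 ∈ Metric.ball d r} := by
    refine hh.comp (g := h) (f := fun s => c + s) (by fun_prop) fun s hs => ?_
    simp only [Set.mem_ofPred_eq, hP]
    simpa [dist_eq_norm] using hs
  have h2 : DifferentiableOn ℂ (fun s => h (c - s)) {s | s ^ 2 ∈ Metric.ball d r} := by
    refine hh.comp (g := h) (f := fun s => c - s) (by fun_prop) fun s hs => ?_
    have := hP (-s)
    simp only [← sub_eq_add_neg] at this
    simp only [Set.mem_ofPred_eq, this]
    simpa [dist_eq_norm] using hs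
  obtain ⟨A, hA, hAe⟩ := even_factor (E := fun s => (h (c + s) + h (c - s)) / 2)
    ((h1.add h2).div_const 2) (fun s => by simp only [← sub_eq_add_neg, sub_neg_eq_add]; ring)
  set O : ℂ → ℂ := fun s => (h (c + s) - h (c - s)) / 2 with hO
  have hOd : DifferentiableOn ℂ O {s | s ^ 2 ∈ Metric.ball d r} := (h1.sub h2).div_const 2
  have hO0 : O 0 = 0 := by simp [hO]
  have hOdd : ∀ s, O (-s) = -O s := fun s => by
    simp only [hO, ← sub_eq_add_neg, sub_neg_eq_add]; ring
  have hD : DifferentiableOn ℂ (dslope O 0) {s | s ^ 2 ∈ Metric.ball d r} := by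
    by_cases h0 : (0 : ℂ) ∈ {s : ℂ | s ^ 2 ∈ Metric.ball d r}
    · exact (Complex.differentiableOn_dslope (hopen.mem_nhds h0)).2 hOd
    · exact (differentiableOn_dslope_of_notMem h0).2 hOd
  have hDs : ∀ s, s * dslope O 0 s = O s := fun s => by
    have := sub_smul_dslope O 0 s
    simpa [hO0] using this
  obtain ⟨B, hB, hBe⟩ := even_factor hD (fun s => by
    rcases eq_or_ne s 0 with rfl | hs
    · simp
    · have a1 := hDs s
      have a2 := hDs (-s)
      rw [hOdd, ← a1] at a2
      exact mul_left_cancel₀ hs (by linear_combination -a2))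
  have hmap : Set.MapsTo (fun u : ℂ => u + d) (Metric.ball 0 r) (Metric.ball d r) := by
    intro u hu; simpa [dist_eq_norm] using hu
  have hA' : DifferentiableOn ℂ (fun u => A (u + d)) (Metric.ball 0 r) :=
    hA.comp (by fun_prop) hmap
  have hB' : DifferentiableOn ℂ (fun u => B (u + d)) (Metric.ball 0 r) :=
    hB.comp (by fun_prop) hmap
  refine ⟨fun u => A (u + d) / (z2 - z1) + B (u + d) / 2,
    fun u => -A (u + d) / (z2 - z1) + B (u + d) / 2,
    (hA'.div_const _).add (hB'.div_const _), (hA'.neg.div_const _).add (hB'.div_const _), ?_⟩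
  intro w
  obtain ⟨s, rfl⟩ : ∃ s, w = c + s := ⟨w - c, by ring⟩
  have e1 : s ^ 2 - d + d = s ^ 2 := by ring
  simp only [hP, e1, hAe, hBe]
  have e2 : h (c + s) = (h (c + s) + h (c - s)) / 2 + s * dslope O 0 s := by
    rw [hDs, hO]; ring
  have e3 : c + s - z1 = s + (z2 - z1) / 2 := by rw [hc]; ring
  have e4 : c + s - z2 = s - (z2 - z1) / 2 := by rw [hc]; ring
  rw [e3, e4]
  conv_lhs => rw [e2]
  field_simp
  ring

/-- Two-point Laurent expansion of `f = h/((z−z1)^{m1}(z−z2)^{m2})`, `h` analytic on `Ω`: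
inside the Cassini oval, `f(z)` is the sum of the convergent regular series (coefficients
`b_n`) and the convergent singular series (coefficients `c_n`, only finitely many nonzero). -/
theorem twoPointLaurent_expansion
    (Ω : Set ℂ) (hΩ : IsOpen Ω) (h : ℂ → ℂ) (hh : DifferentiableOn ℂ h Ω)
    (z1 z2 : ℂ) (hz1 : z1 ∈ Ω) (hz2 : z2 ∈ Ω) (h12 : z1 ≠ z2)
    (m1 m2 : ℕ) (hm1 : 1 ≤ m1) (hm2 : 1 ≤ m2)
    (f g1 g2 : ℂ → ℂ)
    (hfdef : ∀ w, f w = h w / ((w - z1) ^ m1 * (w - z2) ^ m2))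
    (hg1def : ∀ w, g1 w = h w / (w - z2) ^ m2)
    (hg2def : ∀ w, g2 w = h w / (w - z1) ^ m1)
    (z : ℂ) (hz : z ∈ Ω) (hzz1 : z ≠ z1) (hzz2 : z ≠ z2)
    (r : ℝ) (hr : ‖(z - z1) * (z - z2)‖ < r)
    (hrΩ : ∀ w : ℂ, w ∉ Ω → r ≤ ‖(w - z1) * (w - z2)‖) :
    ∃ S1 S2 : ℂ,
      Filter.Tendsto
        (fun N : ℕ => ∑ n ∈ Finset.range N,
          (twoPointLaurentB g1 g2 z1 z2 m1 m2 n * (z - z1)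
            + twoPointLaurentB g2 g1 z2 z1 m2 m1 n * (z - z2)) *
            ((z - z1) * (z - z2)) ^ n)
        Filter.atTop (nhds S1) ∧
      Filter.Tendsto
        (fun N : ℕ => ∑ n ∈ Finset.range N,
          (twoPointLaurentC g1 g2 z1 z2 m1 m2 n * (z - z1)
            + twoPointLaurentC g2 g1 z2 z1 m2 m1 n * (z - z2)) *
            ((z - z1) * (z - z2)) ^ (-(n : ℤ) - 1))
        Filter.atTop (nhds S2) ∧
      f z = S1 + S2 := by
  have hd : z1 - z2 ≠ 0 := sub_ne_zero.2 h12
  have hd' : z2 - z1 ≠ 0 := sub_ne_zero.2 h12.symm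
  have hh1 : AnalyticAt ℂ h z1 := hh.analyticAt (hΩ.mem_nhds hz1)
  have hh2 : AnalyticAt ℂ h z2 := hh.analyticAt (hΩ.mem_nhds hz2)
  have hg1 : AnalyticAt ℂ g1 z1 := by
    rw [funext hg1def]
    exact hh1.fun_div (by fun_prop) (pow_ne_zero _ hd)
  have hg2 : AnalyticAt ℂ g2 z2 := by
    rw [funext hg2def]
    exact hh2.fun_div (by fun_prop) (pow_ne_zero _ hd')
  have hr0 : 0 < r := lt_of_le_of_lt (norm_nonneg _) hr
  have hHd : DifferentiableOn ℂ (fun w => h w * (w - z1) ^ m2 * (w - z2) ^ m1)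
      {w | ‖(w - z1) * (w - z2)‖ < r} := by
    have : DifferentiableOn ℂ h {w | ‖(w - z1) * (w - z2)‖ < r} := by
      refine hh.mono fun w hw => ?_
      by_contra hc
      exact absurd hw (not_lt.2 (hrΩ w hc))
    exact (this.fun_mul (by fun_prop)).fun_mul (by fun_prop)
  obtain ⟨A, B, hA, hB, hAB⟩ := decomp h12 hHd
  have hb0 : Metric.ball (0 : ℂ) r ∈ nhds 0 := Metric.ball_mem_nhds _ hr0
  have hA0 : AnalyticAt ℂ A 0 := hA.analyticAt hb0
  have hB0 : AnalyticAt ℂ B 0 := hB.analyticAt hb0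
  have hp : ∀ n : ℕ, tzc (n : ℤ) A 0 = xco ((n : ℤ) - m1 - m2) g1 g2 z1 z2 m1 m2 := by
    intro n
    rw [← xco_main h12 n hA0 hB0]
    exact xco_reduce _ h12 m1 m2 hg1def hg2def hg1 hg2
      (Filter.Eventually.of_forall fun w => (hAB w).symm)
      (Filter.Eventually.of_forall fun w => (hAB w).symm)
  have hq : ∀ n : ℕ, tzc (n : ℤ) B 0 = xco ((n : ℤ) - m1 - m2) g2 g1 z2 z1 m2 m1 := by
    intro n
    have e : (n : ℤ) - m1 - m2 = n - m2 - m1 := by ring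
    rw [← xco_main h12.symm n hB0 hA0, e]
    have key : ∀ w, B ((w - z2) * (w - z1)) * (w - z2) + A ((w - z2) * (w - z1)) * (w - z1)
        = h w * (w - z2) ^ m1 * (w - z1) ^ m2 := by
      intro w
      rw [mul_comm (w - z2) (w - z1), add_comm, ← hAB w]; ring
    exact xco_reduce _ h12.symm m2 m1 hg2def hg1def hg2 hg1
      (Filter.Eventually.of_forall key) (Filter.Eventually.of_forall key)
  set u : ℂ := (z - z1) * (z - z2) with hu
  have hu0 : u ≠ 0 := mul_ne_zero (sub_ne_zero.2 hzz1) (sub_ne_zero.2 hzz2)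
  have hub : u ∈ Metric.ball (0 : ℂ) r := by simpa using hr
  set t : ℤ → ℂ := fun e => xco e g1 g2 z1 z2 m1 m2 * (z - z1)
    + xco e g2 g1 z2 z1 m2 m1 * (z - z2) with ht
  set M : ℕ := m1 + m2 with hM
  have hsum : HasSum (fun n : ℕ => t ((n : ℤ) - M) * u ^ n)
      (h z * (z - z1) ^ m2 * (z - z2) ^ m1) := by
    have hsA := Complex.hasSum_taylorSeries_on_ball hA hub
    have hsB := Complex.hasSum_taylorSeries_on_ball hB hub
    have := (hsA.mul_right (z - z1)).add (hsB.mul_right (z - z2))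
    rw [hAB z]
    convert! this using 1
    funext n
    have e : (n : ℤ) - (M : ℤ) = (n : ℤ) - m1 - m2 := by rw [hM]; push_cast; ring
    rw [ht, e]
    simp only [← hp, ← hq, tzc_nat, smul_eq_mul, sub_zero]
    ring
  have hsum2 : HasSum (fun n : ℕ => t ((n : ℤ) - M) * u ^ ((n : ℤ) - M)) (f z) := by
    have := hsum.mul_right ((u ^ M)⁻¹)
    convert! this using 1
    · funext n
      rw [zpow_sub₀ hu0, zpow_natCast, zpow_natCast]
      rw [div_eq_mul_inv, mul_assoc]
    · have a1 : z - z1 ≠ 0 := sub_ne_zero.2 hzz1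
      have a2 : z - z2 ≠ 0 := sub_ne_zero.2 hzz2
      rw [hfdef, hu, hM, mul_pow, pow_add, pow_add]
      field_simp
  have htail := (hasSum_nat_add_iff' M).2 hsum2
  refine ⟨f z - ∑ i ∈ Finset.range M, t ((i : ℤ) - M) * u ^ ((i : ℤ) - M),
    ∑ i ∈ Finset.range M, t ((i : ℤ) - M) * u ^ ((i : ℤ) - M), ?_, ?_, by ring⟩
  · convert htail.tendsto_sum_nat using 4 with N n
    · rw [B_eq_xco h12 hm1 hg1 hg2, B_eq_xco h12.symm hm2 hg2 hg1, ht]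
      push_cast
      simp
    · push_cast; simp
  · have hC : ∀ n : ℕ, (twoPointLaurentC g1 g2 z1 z2 m1 m2 n * (z - z1)
            + twoPointLaurentC g2 g1 z2 z1 m2 m1 n * (z - z2)) = t (-(n : ℤ) - 1) := by
      intro n
      rw [C_eq_xco h12 hg1 hg2, C_eq_xco h12.symm hg2 hg1]
    simp only [hC]
    have h0 : ∀ n : ℕ, M ≤ n → t (-(n : ℤ) - 1) * u ^ (-(n : ℤ) - 1) = 0 := by
      intro n hn
      have : t (-(n : ℤ) - 1) = 0 := by
        simp only [ht, xco]
        rw [tzc_neg (by omega), tzc_neg (by omega), tzc_neg (by omega), tzc_neg (by omega)]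
        simp
      rw [this, zero_mul]
    have hfin := hasSum_sum_of_ne_finset_zero (L := SummationFilter.unconditional ℕ)
      (f := fun n : ℕ => t (-(n : ℤ) - 1) * u ^ (-(n : ℤ) - 1)) (s := Finset.range M)
      (fun n hn => h0 n (by simpa using hn))
    convert hfin.tendsto_sum_nat using 2
    rw [← Finset.sum_range_reflect]
    refine Finset.sum_congr rfl fun i hi => ?_
    have hi' := Finset.mem_range.1 hi
    have : ((M - 1 - i : ℕ) : ℤ) - M = -(i : ℤ) - 1 := by omega
    rw [this]
end

section
/- Let Ω ⊆ ℂ be open, z1, z2 ∈ Ω with z1 ≠ z2, m ≥ 1 a natural number, and let g : ℂ → ℂ be analytic on Ω. Define f(z) = g(z)/(z−z1)^m for z ∈ Ω \ {z1}. Let z ∈ Ω with z ≠ z1, and suppose there exists r > |(z−z1)(z−z2)| such that |(w−z1)(w−z2)| ≥ r for every w ∈ ℂ \ Ω. Then f(z) = Σ_{n=0}^{∞} [d_n(z1,z2)(z−z1) + d_n(z2,z1)(z−z2)]·((z−z1)(z−z2))^n + Σ_{n=0}^{m−1} e_n(z1,z2)·(z−z2)^n·(z−z1)^{−n−1}, where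 the first series converges. -/
/-- The Taylor–Laurent coefficient `d_n(z1,z2)` for `f = g/(z−z1)^m`, `g` analytic at `z1`. -/
noncomputable def taylorLaurentD1 (g f : ℂ → ℂ) (z1 z2 : ℂ) (m : ℕ) (n : ℕ) : ℂ :=
  if n = 0 then
    f z2 / (z2 - z1) - ∑ k ∈ Finset.range m,
      iteratedDeriv (m - k - 1) g z1 / ((Nat.factorial (m - k - 1) : ℂ) * (z2 - z1) ^ (k + 2))
  else
    -((-1 : ℂ) ^ n / (Nat.factorial n : ℂ)) *
      ((∑ k ∈ Finset.range (m + n),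
          ((Nat.factorial (n + k) : ℂ) /
              ((Nat.factorial k : ℂ) * (Nat.factorial (m + n - k - 1) : ℂ))) *
            iteratedDeriv (m + n - k - 1) g z1 / (z2 - z1) ^ (n + k + 2))
        + (n : ℂ) * ∑ k ∈ Finset.range (n + 1),
          ((Nat.factorial (n + k - 1) : ℂ) /
              ((Nat.factorial k : ℂ) * (Nat.factorial (n - k) : ℂ))) *
            iteratedDeriv (n - k) f z2 / (z1 - z2) ^ (n + k + 1))

/-- The Taylor–Laurent coefficient `d_n(z2,z1)` for `f = g/(z−z1)^m`, `g` analytic at `z1`. -/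
noncomputable def taylorLaurentD2 (g f : ℂ → ℂ) (z1 z2 : ℂ) (m : ℕ) (n : ℕ) : ℂ :=
  if n = 0 then iteratedDeriv m g z1 / ((Nat.factorial m : ℂ) * (z1 - z2))
  else
    -((-1 : ℂ) ^ n / (Nat.factorial n : ℂ)) *
      ((n : ℂ) * (∑ k ∈ Finset.range (m + n + 1),
          ((Nat.factorial (n + k - 1) : ℂ) /
              ((Nat.factorial k : ℂ) * (Nat.factorial (m + n - k) : ℂ))) *
            iteratedDeriv (m + n - k) g z1 / (z2 - z1) ^ (n + k + 1))
        + ∑ k ∈ Finset.range n,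
          ((Nat.factorial (n + k) : ℂ) /
              ((Nat.factorial k : ℂ) * (Nat.factorial (n - k - 1) : ℂ))) *
            iteratedDeriv (n - k - 1) f z2 / (z1 - z2) ^ (n + k + 2))

/-- The Taylor–Laurent coefficient `e_n(z1,z2)`. -/
noncomputable def taylorLaurentE (g : ℂ → ℂ) (z1 z2 : ℂ) (m : ℕ) (n : ℕ) : ℂ :=
  ((-1 : ℂ) ^ n / (Nat.factorial n : ℂ)) *
    ∑ k ∈ Finset.range (m - n),
      ((Nat.factorial (n + k) : ℂ) /
          ((Nat.factorial k : ℂ) * (Nat.factorial (m - n - k - 1) : ℂ))) *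
        iteratedDeriv (m - n - k - 1) g z1 / (z2 - z1) ^ (n + k)

section TLHelpers

open Complex Metric

/-- Taylor expansion with analytic remainder. -/
lemma tl_taylor (U : Set ℂ) (hU : IsOpen U) (g : ℂ → ℂ) (hg : DifferentiableOn ℂ g U) (c : ℂ)
    (hc : c ∈ U) (n : ℕ) : ∃ R : ℂ → ℂ, DifferentiableOn ℂ R U ∧
      ∀ w, g w = (∑ k ∈ Finset.range n, iteratedDeriv k g c / (Nat.factorial k : ℂ) * (w - c) ^ k)
        + (w - c) ^ n * R w := by
  have hR : ∀ k, DifferentiableOn ℂ ((Function.swap dslope c)^[k] g) U := by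
    intro k
    induction k with
    | zero => exact hg
    | succ k ih =>
      rw [Function.iterate_succ_apply']
      exact (differentiableOn_dslope (hU.mem_nhds hc)).2 ih
  have hval : ∀ k, (Function.swap dslope c)^[k] g c = iteratedDeriv k g c / (Nat.factorial k : ℂ) := by
    intro k
    have h1 := (hg.analyticAt (hU.mem_nhds hc)).hasFPowerSeriesAt
    have h2 := h1.has_fpower_series_iterate_dslope_fslope k
    have h3 := h2.coeff_zero 1
    rw [← h3]
    have h4 := FormalMultilinearSeries.coeff_iterate_fslope (p := FormalMultilinearSeries.ofScalars ℂ
      (fun n ↦ iteratedDeriv n g c / (Nat.factorial n : ℂ))) k 0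
    rw [FormalMultilinearSeries.coeff_ofScalars, zero_add] at h4
    rw [← h4]
    rfl
  refine ⟨_, hR n, ?_⟩
  intro w
  induction n with
  | zero => simp
  | succ n ih =>
    rw [Finset.sum_range_succ, ← hval n, Function.iterate_succ_apply']
    have := sub_smul_dslope ((Function.swap dslope c)^[n] g) c w
    simp only [smul_eq_mul] at this
    simp only [Function.swap] at *
    rw [pow_succ, mul_assoc, this]
    rw [ih]
    ring_nf

/-- An even holomorphic function is a holomorphic function of the square. -/
lemma tl_even (W : Set ℂ) (hW : IsOpen W) (H : ℂ → ℂ)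
    (hH : DifferentiableOn ℂ H {v | v ^ 2 ∈ W}) (heven : ∀ v, H (-v) = H v) :
    ∃ K : ℂ → ℂ, DifferentiableOn ℂ K W ∧ ∀ v, H v = K (v ^ 2) := by
  have hV : IsOpen {v : ℂ | v ^ 2 ∈ W} := hW.preimage (continuous_pow 2)
  have key : ∀ v v' : ℂ, v ^ 2 = v' ^ 2 → H v = H v' := by
    intro v v' h
    rcases sq_eq_sq_iff_eq_or_eq_neg.1 h with h | h
    · rw [h]
    · rw [h, heven]
  have hsq : ∀ s : ℂ, (s ^ (1 / 2 : ℂ)) ^ 2 = s := by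
    intro s
    rw [← Complex.cpow_nat_mul]; norm_num
  refine ⟨fun s => H (s ^ (1 / 2 : ℂ)), ?_, fun v => key _ _ (by rw [hsq])⟩
  have hne : ∀ s ∈ W, s ≠ 0 → DifferentiableAt ℂ (fun s => H (s ^ (1 / 2 : ℂ))) s := by
    intro s hs hs0
    by_cases hsl : s ∈ slitPlane
    · have h1 : DifferentiableAt ℂ (fun s : ℂ => s ^ (1 / 2 : ℂ)) s :=
        differentiableAt_id.cpow (differentiableAt_const _) hsl
      have h2 : DifferentiableAt ℂ H (s ^ (1 / 2 : ℂ)) :=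
        hH.differentiableAt (hV.mem_nhds (by simpa [hsq] using hs))
      exact h2.comp s h1
    · have hsl' : -s ∈ slitPlane := by
        have := Complex.mem_slitPlane_or_neg_mem_slitPlane hs0
        exact this.resolve_left hsl
      have h1 : DifferentiableAt ℂ (fun s : ℂ => I * (-s) ^ (1 / 2 : ℂ)) s :=
        (differentiableAt_id.neg.cpow (differentiableAt_const _) hsl').const_mul _
      have h3 : ∀ s : ℂ, (I * (-s) ^ (1 / 2 : ℂ)) ^ 2 = s := by
        intro s; rw [mul_pow, hsq]; simp
      have h2 : DifferentiableAt ℂ H (I * (-s) ^ (1 / 2 : ℂ)) :=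
        hH.differentiableAt (hV.mem_nhds (by simpa only [Set.mem_ofPred_eq, h3] using hs))
      have : (fun s => H (s ^ (1 / 2 : ℂ))) = fun s => H (I * (-s) ^ (1 / 2 : ℂ)) := by
        funext s; exact key _ _ (by rw [hsq, h3])
      rw [this]
      exact DifferentiableAt.comp s h2 h1
  intro s hs
  by_cases hs0 : s = 0
  · subst hs0
    refine (Complex.analyticAt_of_differentiable_on_punctured_nhds_of_continuousAt ?_ ?_).differentiableAt.differentiableWithinAt
    · rw [eventually_nhdsWithin_iff]
      filter_upwards [hW.mem_nhds hs] with s hs hs0 using hne s hs hs0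
    · have h1 : ContinuousAt (fun s : ℂ => s ^ (1 / 2 : ℂ)) 0 :=
        Complex.continuousAt_cpow_const_of_re_pos (by simp) (by simp)
      refine ContinuousAt.comp (f := fun s : ℂ => s ^ (1 / 2 : ℂ)) (g := H) ?_ h1
      exact (hH.differentiableAt (hV.mem_nhds (by simpa using hs))).continuousAt
  · exact (hne s hs hs0).differentiableWithinAt

/-- Two-point decomposition. -/
lemma tl_decomp (z1 z2 : ℂ) (r : ℝ) (h : ℂ → ℂ)
    (hh : DifferentiableOn ℂ h {w | ‖(w - z1) * (w - z2)‖ < r}) :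
    ∃ A B : ℂ → ℂ, DifferentiableOn ℂ A (ball 0 r) ∧ DifferentiableOn ℂ B (ball 0 r) ∧
      ∀ w, h w = A ((w - z1) * (w - z2)) + (w - (z1 + z2) / 2) * B ((w - z1) * (w - z2)) := by
  set c := (z1 + z2) / 2 with hc
  set δ := ((z1 - z2) / 2) ^ 2 with hδ
  have hP : ∀ w, (w - z1) * (w - z2) = (w - c) ^ 2 - δ := by intro w; rw [hc, hδ]; ring
  set V : Set ℂ := {v | v ^ 2 ∈ ball δ r} with hVdef
  have hV : IsOpen V := isOpen_ball.preimage (continuous_pow 2)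
  have hVm : ∀ v, v ∈ V ↔ ‖v ^ 2 - δ‖ < r := by intro v; simp [hVdef, dist_eq_norm]
  have hp : DifferentiableOn ℂ (fun v => h (c + v)) V := by
    refine hh.comp (by fun_prop) ?_
    intro v hv
    rw [hVm] at hv
    simpa [hP] using hv
  have hm : DifferentiableOn ℂ (fun v => h (c - v)) V := by
    refine hh.comp (by fun_prop) ?_
    intro v hv
    rw [hVm] at hv
    simpa [hP] using hv
  have hO : DifferentiableOn ℂ (fun v => h (c + v) - h (c - v)) V := hp.sub hm
  have hD : DifferentiableOn ℂ (dslope (fun v => h (c + v) - h (c - v)) 0) V := by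
    by_cases h0 : (0 : ℂ) ∈ V
    · exact (differentiableOn_dslope (hV.mem_nhds h0)).2 hO
    · exact (differentiableOn_dslope_of_notMem h0).2 hO
  obtain ⟨A, hA, hA'⟩ := tl_even (ball δ r) isOpen_ball (fun v => h (c + v) + h (c - v)) (hp.add hm)
    (by intro v; simp only [sub_neg_eq_add, ← sub_eq_add_neg]; ring)
  obtain ⟨B, hB, hB'⟩ := tl_even (ball δ r) isOpen_ball _ hD (by
    intro v
    by_cases hv : v = 0
    · simp [hv]
    · rw [dslope_of_ne _ (neg_ne_zero.2 hv), dslope_of_ne _ hv, slope_def_field, slope_def_field]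
      simp only [sub_neg_eq_add, ← sub_eq_add_neg, add_zero, sub_zero, sub_self]
      field_simp
      ring)
  have hmaps : Set.MapsTo (fun t : ℂ => t + δ) (ball 0 r) (ball δ r) := by
    intro t ht; simpa [dist_eq_norm] using ht
  refine ⟨fun t => A (t + δ) / 2, fun t => B (t + δ) / 2,
    (hA.comp (by fun_prop) hmaps).div_const _, (hB.comp (by fun_prop) hmaps).div_const _, ?_⟩
  intro w
  have h1 := hA' (w - c)
  have h2 := hB' (w - c)
  have h3 := sub_smul_dslope (fun v => h (c + v) - h (c - v)) 0 (w - c)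
  rw [h2] at h3
  simp only [smul_eq_mul, sub_zero, add_zero, sub_self, add_sub_cancel] at h1 h3
  simp only [hP, sub_add_cancel]
  rw [← h1]
  linear_combination (-1 / 2 : ℂ) * h3

/-- Sum of the two small circle integrals. -/
noncomputable def tlC (z1 z2 : ℂ) (ε : ℝ) (F : ℂ → ℂ) : ℂ :=
  (∮ w in C(z1, ε), F w) + ∮ w in C(z2, ε), F w

lemma tlC_congr {z1 z2 : ℂ} {ε : ℝ} (hε : 0 < ε) {F G : ℂ → ℂ}
    (h : ∀ w, w ∈ sphere z1 ε ∪ sphere z2 ε → F w = G w) : tlC z1 z2 ε F = tlC z1 z2 ε G := by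
  unfold tlC
  rw [circleIntegral.integral_congr hε.le (fun w hw => h w (Or.inl hw)),
    circleIntegral.integral_congr hε.le (fun w hw => h w (Or.inr hw))]

lemma tlC_add {z1 z2 : ℂ} {ε : ℝ} (hε : 0 < ε) {F G : ℂ → ℂ}
    (hF : ContinuousOn F (sphere z1 ε ∪ sphere z2 ε))
    (hG : ContinuousOn G (sphere z1 ε ∪ sphere z2 ε)) :
    tlC z1 z2 ε (fun w => F w + G w) = tlC z1 z2 ε F + tlC z1 z2 ε G := by
  unfold tlC
  rw [circleIntegral.integral_add ((hF.mono Set.subset_union_left).circleIntegrable hε.le)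
    ((hG.mono Set.subset_union_left).circleIntegrable hε.le),
    circleIntegral.integral_add ((hF.mono Set.subset_union_right).circleIntegrable hε.le)
    ((hG.mono Set.subset_union_right).circleIntegrable hε.le)]
  ring

lemma tlC_const_mul {z1 z2 : ℂ} {ε : ℝ} (a : ℂ) (F : ℂ → ℂ) :
    tlC z1 z2 ε (fun w => a * F w) = a * tlC z1 z2 ε F := by
  unfold tlC
  rw [circleIntegral.integral_const_mul, circleIntegral.integral_const_mul]
  ring

lemma tlC_sum {z1 z2 : ℂ} {ε : ℝ} (hε : 0 < ε) (s : Finset ℕ) (F : ℕ → ℂ → ℂ)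
    (hF : ∀ i ∈ s, ContinuousOn (F i) (sphere z1 ε ∪ sphere z2 ε)) :
    tlC z1 z2 ε (fun w => ∑ i ∈ s, F i w) = ∑ i ∈ s, tlC z1 z2 ε (F i) := by
  unfold tlC
  rw [circleIntegral.integral_fun_sum
    (fun i hi => ((hF i hi).mono Set.subset_union_left).circleIntegrable hε.le),
    circleIntegral.integral_fun_sum
    (fun i hi => ((hF i hi).mono Set.subset_union_right).circleIntegrable hε.le),
    Finset.sum_add_distrib]

lemma tl_circle_zero {c : ℂ} {ε : ℝ} (hε : 0 < ε) {F : ℂ → ℂ}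
    (hF : DifferentiableOn ℂ F (closedBall c ε)) : (∮ w in C(c, ε), F w) = 0 :=
  circleIntegral_eq_zero_of_differentiable_on_off_countable hε.le Set.countable_empty
    hF.continuousOn (fun _ hz => hF.differentiableAt
      (Filter.mem_of_superset (isOpen_ball.mem_nhds hz.1) ball_subset_closedBall))

lemma tlC_zero {z1 z2 : ℂ} {ε : ℝ} (hε : 0 < ε) {F : ℂ → ℂ}
    (hF : DifferentiableOn ℂ F (closedBall z1 ε ∪ closedBall z2 ε)) : tlC z1 z2 ε F = 0 := by
  unfold tlC
  rw [tl_circle_zero hε (hF.mono Set.subset_union_left),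
    tl_circle_zero hε (hF.mono Set.subset_union_right), add_zero]

/-- The kernel. -/
noncomputable def tlG (z1 z2 : ℂ) (i j : ℕ) (w : ℂ) : ℂ := ((w - z1) ^ i * (w - z2) ^ j)⁻¹

lemma tl_ne_of_mem {z1 z2 : ℂ} {ε : ℝ} (hε : 0 < ε) (h : ε < ‖z1 - z2‖) {w : ℂ}
    (hw : w ∈ sphere z1 ε ∪ sphere z2 ε) : w - z1 ≠ 0 ∧ w - z2 ≠ 0 := by
  constructor
  · intro h0
    have : w = z1 := sub_eq_zero.1 h0
    subst this
    rcases hw with hw | hw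
    · simp at hw; linarith
    · rw [mem_sphere, dist_eq_norm] at hw; linarith
  · intro h0
    have : w = z2 := sub_eq_zero.1 h0
    subst this
    rcases hw with hw | hw
    · rw [mem_sphere, dist_comm, dist_eq_norm] at hw; linarith
    · simp at hw; linarith

lemma tl_ne_ball {a b : ℂ} {ε : ℝ} (h : ε < ‖a - b‖) {w : ℂ}
    (hw : w ∈ closedBall a ε) : w - b ≠ 0 := by
  intro h0
  have : w = b := sub_eq_zero.1 h0
  subst this
  rw [mem_closedBall, dist_comm, dist_eq_norm] at hw; linarith

lemma tlG_cont {z1 z2 : ℂ} {ε : ℝ} (hε : 0 < ε) (h : ε < ‖z1 - z2‖) (i j : ℕ) :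
    ContinuousOn (tlG z1 z2 i j) (sphere z1 ε ∪ sphere z2 ε) := by
  unfold tlG
  refine ContinuousOn.inv₀ (by fun_prop) ?_
  intro w hw
  obtain ⟨h1, h2⟩ := tl_ne_of_mem hε h hw
  exact mul_ne_zero (pow_ne_zero _ h1) (pow_ne_zero _ h2)

lemma tlG_mul_cont {z1 z2 : ℂ} {ε : ℝ} (hε : 0 < ε) (h : ε < ‖z1 - z2‖) (a : ℂ) (i j : ℕ) :
    ContinuousOn (fun w => a * tlG z1 z2 i j w) (sphere z1 ε ∪ sphere z2 ε) :=
  continuousOn_const.mul (tlG_cont hε h i j)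

lemma tlG_swap (z1 z2 : ℂ) (i j : ℕ) : tlG z1 z2 i j = tlG z2 z1 j i := by
  funext w; unfold tlG; rw [mul_comm]

lemma tlC_swap (z1 z2 : ℂ) (ε : ℝ) (F : ℂ → ℂ) : tlC z1 z2 ε F = tlC z2 z1 ε F := by
  unfold tlC; rw [add_comm]

lemma tl_inv_diff {a b : ℂ} {ε : ℝ} (h : ε < ‖a - b‖) (j : ℕ) :
    DifferentiableOn ℂ (fun w : ℂ => ((w - b) ^ j)⁻¹) (closedBall a ε) := by
  refine DifferentiableOn.inv (by fun_prop) ?_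
  intro w hw
  exact pow_ne_zero _ (tl_ne_ball h hw)

lemma tlC_G_zero_left {z1 z2 : ℂ} {ε : ℝ} (hε : 0 < ε) (h : ε < ‖z1 - z2‖) (j : ℕ) (hj : j ≠ 1) :
    tlC z1 z2 ε (tlG z1 z2 0 j) = 0 := by
  have e : tlG z1 z2 0 j = fun w : ℂ => ((w - z2) ^ j)⁻¹ := by funext w; simp [tlG]
  rw [e]
  unfold tlC
  rw [tl_circle_zero hε (tl_inv_diff h j), zero_add]
  have := circleIntegral.integral_sub_zpow_of_ne (n := -(j : ℤ)) (by omega) z2 z2 ε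
  simpa using this

lemma tlC_G_one {z1 z2 : ℂ} {ε : ℝ} (hε : 0 < ε) (h : ε < ‖z1 - z2‖) :
    tlC z1 z2 ε (tlG z1 z2 0 1) = 2 * Real.pi * I := by
  have e : tlG z1 z2 0 1 = fun w : ℂ => ((w - z2) ^ 1)⁻¹ := by funext w; simp [tlG]
  rw [e]
  unfold tlC
  rw [tl_circle_zero hε (tl_inv_diff h 1), zero_add]
  simpa using circleIntegral.integral_sub_center_inv z2 hε.ne'

lemma tlC_G {z1 z2 : ℂ} {ε : ℝ} (hε : 0 < ε) (h : ε < ‖z1 - z2‖) (s : ℕ) :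
    ∀ i j : ℕ, i + j = s + 2 → tlC z1 z2 ε (tlG z1 z2 i j) = 0 := by
  have hne : z2 - z1 ≠ 0 := by
    intro h0
    have : z1 - z2 = 0 := by rw [← neg_sub, h0, neg_zero]
    rw [this, norm_zero] at h; linarith
  have h' : ε < ‖z2 - z1‖ := by rwa [norm_sub_rev]
  have step : ∀ i j : ℕ, tlC z1 z2 ε (tlG z1 z2 (i + 1) (j + 1)) =
      (z2 - z1)⁻¹ * (tlC z1 z2 ε (tlG z1 z2 i (j + 1)) - tlC z1 z2 ε (tlG z1 z2 (i + 1) j)) := by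
    intro i j
    have : tlC z1 z2 ε (tlG z1 z2 (i + 1) (j + 1)) = tlC z1 z2 ε
        (fun w => (z2 - z1)⁻¹ * (tlG z1 z2 i (j + 1) w + (-1) * tlG z1 z2 (i + 1) j w)) := by
      refine tlC_congr hε ?_
      intro w hw
      obtain ⟨h1, h2⟩ := tl_ne_of_mem hε h hw
      unfold tlG
      field_simp
      ring
    rw [this, tlC_const_mul, tlC_add hε (tlG_cont hε h _ _)
      (tlG_mul_cont hε h _ _ _), tlC_const_mul]
    ring
  induction s with
  | zero =>
    intro i j hij
    match i, j with
    | 0, j => exact tlC_G_zero_left hε h j (by omega)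
    | i + 1, 0 => rw [tlC_swap, tlG_swap]; exact tlC_G_zero_left hε h' _ (by omega)
    | i + 1, j + 1 =>
      obtain rfl : i = 0 := by omega
      obtain rfl : j = 0 := by omega
      rw [step, tlC_G_one hε h, tlC_swap z1, tlG_swap z1, tlC_G_one hε h', sub_self, mul_zero]
  | succ s ih =>
    intro i j hij
    match i, j with
    | 0, j => exact tlC_G_zero_left hε h j (by omega)
    | i + 1, 0 => rw [tlC_swap, tlG_swap]; exact tlC_G_zero_left hε h' _ (by omega)
    | i + 1, j + 1 =>
      rw [step, ih _ _ (by omega), ih _ _ (by omega), sub_zero, mul_zero]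

/-- Coefficient extraction for a two-point expansion. -/
lemma tl_extract {z1 z2 : ℂ} {ε : ℝ} (hε : 0 < ε) (hd : ε < ‖z1 - z2‖) (n : ℕ) (c c' : ℕ → ℂ)
    (T h : ℂ → ℂ) (hT : DifferentiableOn ℂ T (closedBall z1 ε ∪ closedBall z2 ε))
    (hh : ∀ w ∈ closedBall z1 ε ∪ closedBall z2 ε,
      h w = (∑ j ∈ Finset.range (n + 1), (c j * (w - z1) + c' j * (w - z2)) *
        ((w - z1) * (w - z2)) ^ j) + ((w - z1) * (w - z2)) ^ (n + 1) * T w) :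
    tlC z1 z2 ε (fun w => h w * tlG z1 z2 n (n + 1) w) = 2 * Real.pi * I * (c n * (z2 - z1)) := by
  have hsub : sphere z1 ε ∪ sphere z2 ε ⊆ closedBall z1 ε ∪ closedBall z2 ε :=
    Set.union_subset_union sphere_subset_closedBall sphere_subset_closedBall
  have hTc := hT.continuousOn.mono hsub
  have hGc := fun a i j => tlG_mul_cont hε hd a i j
  have e : tlC z1 z2 ε (fun w => h w * tlG z1 z2 n (n + 1) w) = tlC z1 z2 ε (fun w =>
      (∑ j ∈ Finset.range n, (c j * tlG z1 z2 (n - j - 1) (n - j + 1) w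
        + c' j * tlG z1 z2 (n - j) (n - j) w))
      + ((c n * (z2 - z1)) * tlG z1 z2 0 1 w + (c n + c' n + (w - z1) * T w))) := by
    refine tlC_congr hε ?_
    intro w hw
    obtain ⟨h1, h2⟩ := tl_ne_of_mem hε hd hw
    simp only [hh w (hsub hw)]
    rw [Finset.sum_range_succ, add_mul, add_mul, Finset.sum_mul, add_assoc]
    congr 1
    · refine Finset.sum_congr rfl ?_
      intro j hj
      obtain ⟨k, rfl⟩ := Nat.exists_eq_add_of_lt (Finset.mem_range.1 hj)
      have e1 : j + k + 1 - j = k + 1 := by omega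
      rw [e1]
      simp only [Nat.add_sub_cancel, tlG, mul_pow]
      field_simp
      ring
    · simp only [tlG, mul_pow]
      field_simp
      ring
  rw [e, tlC_add hε, tlC_sum hε, tlC_add hε, tlC_const_mul, tlC_G_one hε hd, tlC_zero hε,
    Finset.sum_eq_zero]
  · ring
  · intro j hj
    rw [Finset.mem_range] at hj
    rw [tlC_add hε (hGc _ _ _) (hGc _ _ _),
      tlC_const_mul, tlC_const_mul, tlC_G hε hd (2 * (n - j) - 2) _ _ (by omega),
      tlC_G hε hd (2 * (n - j) - 2) _ _ (by omega)]
    ring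
  · fun_prop
  · exact hGc _ _ _
  · fun_prop
  · intro j _
    exact (hGc _ _ _).add (hGc _ _ _)
  · exact continuousOn_finsetSum _ fun j _ =>
      (hGc _ _ _).add (hGc _ _ _)
  · exact (hGc _ _ _).add (by fun_prop)

/-- The circle integral computing a residue through the Leibniz rule. -/
lemma tl_residue {a b : ℂ} {ε : ℝ} (hε : 0 < ε) (hd : ε < ‖a - b‖) (N s : ℕ) (Φ : ℂ → ℂ)
    (hΦ : DifferentiableOn ℂ Φ (closedBall a ε)) :
    (∮ w in C(a, ε), (1 / (w - a) ^ (N + 1)) * (Φ w * ((w - b) ^ (s + 1))⁻¹)) =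
      2 * Real.pi * I * ∑ k ∈ Finset.range (N + 1), (-1) ^ k * (Nat.factorial (s + k) : ℂ) /
        ((Nat.factorial s : ℂ) * (Nat.factorial k : ℂ) * (Nat.factorial (N - k) : ℂ)) *
        iteratedDeriv (N - k) Φ a / (a - b) ^ (s + 1 + k) := by
  have hf : ∀ n : ℕ, (Nat.factorial n : ℂ) ≠ 0 := fun n => Nat.cast_ne_zero.2 n.factorial_ne_zero
  have hb := tl_inv_diff hd (s + 1)
  have hnb : closedBall a ε ∈ nhds a := closedBall_mem_nhds a hε
  have h1 := (hΦ.mul hb).circleIntegral_one_div_sub_center_pow_smul hε N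
  simp only [smul_eq_mul, Pi.mul_apply] at h1
  have hab : a - b ≠ 0 := tl_ne_ball hd (mem_closedBall_self hε.le)
  have hder : ∀ k, iteratedDeriv k (fun w : ℂ => ((w - b) ^ (s + 1))⁻¹) a =
      (-1) ^ k * (Nat.factorial (s + k) : ℂ) / (Nat.factorial s : ℂ) / (a - b) ^ (s + 1 + k) := by
    intro k
    have e : (fun w : ℂ => ((w - b) ^ (s + 1))⁻¹) = fun w : ℂ => (fun u : ℂ => u ^ (-(s + 1 : ℕ) : ℤ)) (w - b) := by
      funext w; simp only [zpow_neg, zpow_natCast]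
    rw [e, iteratedDeriv_comp_sub_const k (fun u : ℂ => u ^ (-(s + 1 : ℕ) : ℤ)) b]
    simp only
    rw [iteratedDeriv_eq_iterate, iter_deriv_zpow]
    have e2 : (a - b) ^ ((-(s + 1 : ℕ) : ℤ) - k) = ((a - b) ^ (s + 1 + k))⁻¹ := by
      rw [← zpow_natCast, ← zpow_neg]; congr 1; push_cast; ring
    rw [e2, div_eq_mul_inv _ ((a - b) ^ _)]
    congr 1
    induction k with
    | zero => simp [Nat.factorial_ne_zero]
    | succ k ih =>
      rw [Finset.prod_range_succ, ih (by
        rw [← zpow_natCast, ← zpow_neg]; congr 1; push_cast; ring), ← add_assoc, Nat.factorial_succ]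
      push_cast
      have := hf s
      field_simp
      ring
  rw [iteratedDeriv_mul (hΦ.analyticAt hnb).contDiffAt
    (hb.analyticAt hnb).contDiffAt] at h1
  rw [h1, ← Finset.sum_range_reflect, Finset.mul_sum, Finset.mul_sum]
  refine Finset.sum_congr rfl ?_
  intro k hk
  have hk' : k ≤ N := by rw [Finset.mem_range] at hk; omega
  have e1 : N + 1 - 1 - k = N - k := by omega
  have e2 : N - (N - k) = k := by omega
  rw [e1, e2, hder, Nat.cast_choose ℂ (Nat.sub_le N k), e2]

  have := hf N
  have := hf (N - k)
  have := hf k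
  have := hf s
  field_simp

/-- The singular part is the principal part of `f` at `z1`. -/
lemma tl_E (g : ℂ → ℂ) (z1 z2 z : ℂ) (h12 : z1 ≠ z2) (hz : z ≠ z1) (m : ℕ) :
    ∑ n ∈ Finset.range m,
        taylorLaurentE g z1 z2 m n * (z - z2) ^ n * (z - z1) ^ (-(n : ℤ) - 1) =
      ∑ k ∈ Finset.range m, iteratedDeriv k g z1 / (Nat.factorial k : ℂ) * tlG z1 z2 (m - k) 0 z := by
  have hf : ∀ n : ℕ, (Nat.factorial n : ℂ) ≠ 0 := fun n => Nat.cast_ne_zero.2 n.factorial_ne_zero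
  have ha : z2 - z1 ≠ 0 := sub_ne_zero.2 h12.symm
  have hu : z - z1 ≠ 0 := sub_ne_zero.2 hz
  have e1 : ∀ n ∈ Finset.range m,
      taylorLaurentE g z1 z2 m n * (z - z2) ^ n * (z - z1) ^ (-(n : ℤ) - 1) =
      ∑ k ∈ Finset.range (m - n), (fun n k : ℕ => (-1 : ℂ) ^ n * ((n + k).choose n : ℂ) *
        (iteratedDeriv (m - (n + k) - 1) g z1 / (Nat.factorial (m - (n + k) - 1) : ℂ)) /
        (z2 - z1) ^ (n + k) * (z - z2) ^ n / (z - z1) ^ (n + 1)) n k := by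
    intro n _
    unfold taylorLaurentE
    rw [Finset.mul_sum, Finset.sum_mul, Finset.sum_mul]
    refine Finset.sum_congr rfl ?_
    intro k _
    have e2 : (z - z1) ^ (-(n : ℤ) - 1) = ((z - z1) ^ (n + 1))⁻¹ := by
      rw [← zpow_natCast, ← zpow_neg]; congr 1; push_cast; ring
    beta_reduce
    rw [e2, Nat.cast_choose ℂ (Nat.le_add_right n k), Nat.add_sub_cancel_left, Nat.sub_add_eq m n k]
    have := hf n
    have := hf k
    have := hf (m - n - k - 1)
    field_simp
  rw [Finset.sum_congr rfl e1, ← Finset.sum_range_diag_flip, ← Finset.sum_range_reflect _ m]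
  refine Finset.sum_congr rfl ?_
  intro j hj
  rw [Finset.mem_range] at hj
  obtain ⟨d, hd⟩ : ∃ d, m - 1 - j = d := ⟨_, rfl⟩
  rw [hd]
  have e3 : m - d - 1 = j := by omega
  have e4 : m - j = d + 1 := by omega
  have hb : (z2 - z1) ^ d = ∑ n ∈ Finset.range (d + 1), (-1 : ℂ) ^ n * (d.choose n : ℂ) *
      (z - z2) ^ n * (z - z1) ^ (d - n) := by
    have := add_pow (-(z - z2)) (z - z1) d
    rw [show -(z - z2) + (z - z1) = z2 - z1 by ring] at this
    rw [this]
    refine Finset.sum_congr rfl fun n _ => ?_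
    rw [neg_pow]; ring
  have e5 : ∀ n ∈ Finset.range (d + 1), (fun n k : ℕ => (-1 : ℂ) ^ n * ((n + k).choose n : ℂ) *
        (iteratedDeriv (m - (n + k) - 1) g z1 / (Nat.factorial (m - (n + k) - 1) : ℂ)) /
        (z2 - z1) ^ (n + k) * (z - z2) ^ n / (z - z1) ^ (n + 1)) n (d - n) =
      ((-1 : ℂ) ^ n * (d.choose n : ℂ) * (z - z2) ^ n * (z - z1) ^ (d - n)) *
      ((iteratedDeriv j g z1 / (Nat.factorial j : ℂ)) / (z2 - z1) ^ d / (z - z1) ^ (d + 1)) := by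
    intro n hn
    obtain ⟨k, rfl⟩ := Nat.exists_eq_add_of_le (Nat.lt_succ_iff.1 (Finset.mem_range.1 hn))
    simp only [Nat.add_sub_cancel_left, e3]
    have := hf j
    field_simp
    ring
  rw [Finset.sum_congr rfl e5, ← Finset.sum_mul, ← hb, e4, tlG]
  have := hf j
  field_simp
  try simp

lemma tl_D1 {z1 z2 : ℂ} {ε : ℝ} (hε : 0 < ε) (hd : ε < ‖z1 - z2‖) (g f : ℂ → ℂ) (m : ℕ)
    (hm : 1 ≤ m) (hfdef : ∀ w, f w = g w / (w - z1) ^ m)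
    (hg : DifferentiableOn ℂ g (closedBall z1 ε)) (hff : DifferentiableOn ℂ f (closedBall z2 ε))
    (n : ℕ) : tlC z1 z2 ε (fun w => f w * tlG z1 z2 n (n + 1) w) =
      2 * Real.pi * I * (taylorLaurentD1 g f z1 z2 m n * (z2 - z1)) := by
  have hf : ∀ n : ℕ, (Nat.factorial n : ℂ) ≠ 0 := fun n => Nat.cast_ne_zero.2 n.factorial_ne_zero
  have hd' : ε < ‖z2 - z1‖ := by rwa [norm_sub_rev]
  have ha : z2 - z1 ≠ 0 := tl_ne_ball hd' (mem_closedBall_self hε.le)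
  have hs : ∀ p : ℕ, (z1 - z2) ^ p = (-1) ^ p * (z2 - z1) ^ p := by
    intro p; rw [← mul_pow]; congr 1; ring
  have i1 : (∮ w in C(z1, ε), f w * tlG z1 z2 n (n + 1) w) =
      ∮ w in C(z1, ε), (1 / (w - z1) ^ ((m + n - 1) + 1)) * (g w * ((w - z2) ^ (n + 1))⁻¹) := by
    refine circleIntegral.integral_congr hε.le fun w hw => ?_
    obtain ⟨h1, h2⟩ := tl_ne_of_mem hε hd (Or.inl hw)
    rw [Nat.sub_add_cancel (by omega)]
    simp only [hfdef, tlG]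
    field_simp
    ring
  unfold tlC
  rw [i1, tl_residue hε hd _ _ g hg, Nat.sub_add_cancel (by omega)]
  rcases n with _ | n
  · have i2 : (∮ w in C(z2, ε), f w * tlG z1 z2 0 (0 + 1) w) = 2 * Real.pi * I * f z2 := by
      have := hff.circleIntegral_one_div_sub_center_pow_smul hε 0
      simp only [smul_eq_mul, Nat.factorial_zero, Nat.cast_one, div_one, iteratedDeriv_zero] at this
      rw [← this]
      refine circleIntegral.integral_congr hε.le fun w hw => ?_
      simp only [tlG, pow_zero, one_mul, one_div]
      ring
    rw [i2, ← mul_add]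
    congr 1
    simp only [taylorLaurentD1, if_true, add_zero, zero_add]
    rw [sub_mul, div_mul_cancel₀ _ ha, add_comm, sub_eq_add_neg (f z2)]
    congr 1
    rw [Finset.sum_mul, ← Finset.sum_neg_distrib]
    refine Finset.sum_congr rfl fun k _ => ?_
    have e : m - 1 - k = m - k - 1 := by omega
    rw [e, hs]
    have := hf k
    have := hf (m - k - 1)
    rcases neg_one_pow_eq_or ℂ k with h | h <;> simp only [pow_add, h, Nat.factorial_zero, Nat.cast_one] <;>
      field_simp
  · have i2 : (∮ w in C(z2, ε), f w * tlG z1 z2 (n + 1) (n + 1 + 1) w) =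
      ∮ w in C(z2, ε), (1 / (w - z2) ^ ((n + 1) + 1)) * (f w * ((w - z1) ^ (n + 1))⁻¹) := by
      refine circleIntegral.integral_congr hε.le fun w hw => ?_
      obtain ⟨h1, h2⟩ := tl_ne_of_mem hε hd (Or.inr hw)
      simp only [tlG]
      field_simp
    rw [i2, tl_residue hε hd' _ _ f hff, ← mul_add]
    congr 1
    simp only [taylorLaurentD1, if_neg (Nat.succ_ne_zero n)]
    rw [mul_add, add_mul, Finset.mul_sum, Finset.mul_sum, Finset.mul_sum, Finset.sum_mul,
      Finset.sum_mul]
    congr 1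
    · refine Finset.sum_congr rfl fun k _ => ?_
      have e : m + (n + 1) - 1 - k = m + (n + 1) - k - 1 := by omega
      rw [e, hs]
      have := hf k
      have := hf (n + 1)
      have := hf (m + (n + 1) - k - 1)
      rcases neg_one_pow_eq_or ℂ k with h | h <;> rcases neg_one_pow_eq_or ℂ n with h' | h' <;>
        simp only [pow_add, h, h'] <;> field_simp
    · refine Finset.sum_congr rfl fun k _ => ?_
      have e : n + 1 + k - 1 = n + k := by omega
      rw [e, hs, Nat.factorial_succ n]
      have := hf k
      have := hf n
      have := hf (n + 1 - k)
      have : (n : ℂ) + 1 ≠ 0 := Nat.cast_add_one_ne_zero n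
      push_cast
      rcases neg_one_pow_eq_or ℂ k with h | h <;> rcases neg_one_pow_eq_or ℂ n with h' | h' <;>
        simp only [pow_add, h, h'] <;> field_simp

lemma tl_D2 {z1 z2 : ℂ} {ε : ℝ} (hε : 0 < ε) (hd : ε < ‖z1 - z2‖) (g f : ℂ → ℂ) (m : ℕ)
    (hfdef : ∀ w, f w = g w / (w - z1) ^ m)
    (hg : DifferentiableOn ℂ g (closedBall z1 ε)) (hff : DifferentiableOn ℂ f (closedBall z2 ε))
    (n : ℕ) : tlC z1 z2 ε (fun w => f w * tlG z1 z2 (n + 1) n w) =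
      2 * Real.pi * I * (taylorLaurentD2 g f z1 z2 m n * (z1 - z2)) := by
  have hf : ∀ n : ℕ, (Nat.factorial n : ℂ) ≠ 0 := fun n => Nat.cast_ne_zero.2 n.factorial_ne_zero
  have hd' : ε < ‖z2 - z1‖ := by rwa [norm_sub_rev]
  have ha : z2 - z1 ≠ 0 := tl_ne_ball hd' (mem_closedBall_self hε.le)
  have ha' : z1 - z2 ≠ 0 := tl_ne_ball hd (mem_closedBall_self hε.le)
  have hs : ∀ p : ℕ, (z1 - z2) ^ p = (-1) ^ p * (z2 - z1) ^ p := by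
    intro p; rw [← mul_pow]; congr 1; ring
  unfold tlC
  rcases n with _ | n
  · have i1 : (∮ w in C(z1, ε), f w * tlG z1 z2 (0 + 1) 0 w) =
        2 * Real.pi * I * (iteratedDeriv m g z1 / (Nat.factorial m : ℂ)) := by
      have := hg.circleIntegral_one_div_sub_center_pow_smul hε m
      rw [smul_eq_mul] at this
      rw [mul_div_assoc', mul_div_right_comm, ← this]
      refine circleIntegral.integral_congr hε.le fun w hw => ?_
      obtain ⟨h1, h2⟩ := tl_ne_of_mem hε hd (Or.inl hw)
      simp only [tlG, hfdef, smul_eq_mul]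
      field_simp
      ring
    have i2 : (∮ w in C(z2, ε), f w * tlG z1 z2 (0 + 1) 0 w) = 0 := by
      refine tl_circle_zero hε (hff.mul ?_)
      have := tl_inv_diff hd' 1
      have e : tlG z1 z2 (0 + 1) 0 = fun w => ((w - z1) ^ 1)⁻¹ := by funext w; simp [tlG]
      rw [e]; exact this
    rw [i1, i2, add_zero]
    congr 1
    simp only [taylorLaurentD2, if_true]
    have := hf m
    field_simp
  · have i1 : (∮ w in C(z1, ε), f w * tlG z1 z2 (n + 1 + 1) (n + 1) w) =
        ∮ w in C(z1, ε), (1 / (w - z1) ^ ((m + (n + 1)) + 1)) * (g w * ((w - z2) ^ (n + 1))⁻¹) := by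
      refine circleIntegral.integral_congr hε.le fun w hw => ?_
      obtain ⟨h1, h2⟩ := tl_ne_of_mem hε hd (Or.inl hw)
      simp only [hfdef, tlG]
      field_simp
      ring
    have i2 : (∮ w in C(z2, ε), f w * tlG z1 z2 (n + 1 + 1) (n + 1) w) =
      ∮ w in C(z2, ε), (1 / (w - z2) ^ (n + 1)) * (f w * ((w - z1) ^ (n + 1 + 1))⁻¹) := by
      refine circleIntegral.integral_congr hε.le fun w hw => ?_
      obtain ⟨h1, h2⟩ := tl_ne_of_mem hε hd (Or.inr hw)
      simp only [tlG]
      field_simp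
    rw [i1, i2, tl_residue hε hd _ _ g hg, tl_residue hε hd' _ _ f hff, ← mul_add]
    congr 1
    simp only [taylorLaurentD2, if_neg (Nat.succ_ne_zero n)]
    rw [mul_add, add_mul, Finset.mul_sum, Finset.mul_sum, Finset.mul_sum, Finset.sum_mul,
      Finset.sum_mul]
    have e0 : z1 - z2 = -(z2 - z1) := by ring
    congr 1
    · refine Finset.sum_congr rfl fun k _ => ?_
      have e : n + 1 + k - 1 = n + k := by omega
      rw [e, hs, e0, Nat.factorial_succ n]
      have := hf k
      have := hf n
      have := hf (m + (n + 1) - k)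
      have : (n : ℂ) + 1 ≠ 0 := Nat.cast_add_one_ne_zero n
      push_cast
      rcases neg_one_pow_eq_or ℂ k with h | h <;> rcases neg_one_pow_eq_or ℂ n with h' | h' <;>
        simp only [pow_add, h, h'] <;> field_simp
    · refine Finset.sum_congr rfl fun k _ => ?_
      have e : n + 1 - k - 1 = n - k := by omega
      rw [e, hs, e0]
      have := hf k
      have := hf (n + 1)
      have := hf (n - k)
      rcases neg_one_pow_eq_or ℂ k with h | h <;> rcases neg_one_pow_eq_or ℂ n with h' | h' <;>
        simp only [pow_add, h, h'] <;> field_simp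

end TLHelpers

/-- Two-point Taylor–Laurent expansion of `f = g/(z−z1)^m`, `g` analytic on `Ω`:
inside the region of convergence, `f(z)` is the sum of the convergent regular series
(coefficients `d_n`) and the finite singular sum (coefficients `e_n`). -/
theorem taylorLaurent_expansion
    (Ω : Set ℂ) (hΩ : IsOpen Ω) (g : ℂ → ℂ) (hg : DifferentiableOn ℂ g Ω)
    (z1 z2 : ℂ) (hz1 : z1 ∈ Ω) (hz2 : z2 ∈ Ω) (h12 : z1 ≠ z2)
    (m : ℕ) (hm : 1 ≤ m)
    (f : ℂ → ℂ) (hfdef : ∀ w, f w = g w / (w - z1) ^ m)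
    (z : ℂ) (hz : z ∈ Ω) (hzz1 : z ≠ z1)
    (r : ℝ) (hr : ‖(z - z1) * (z - z2)‖ < r)
    (hrΩ : ∀ w : ℂ, w ∉ Ω → r ≤ ‖(w - z1) * (w - z2)‖) :
    ∃ S : ℂ,
      Filter.Tendsto
        (fun N : ℕ => ∑ n ∈ Finset.range N,
          (taylorLaurentD1 g f z1 z2 m n * (z - z1)
            + taylorLaurentD2 g f z1 z2 m n * (z - z2)) *
            ((z - z1) * (z - z2)) ^ n)
        Filter.atTop (nhds S) ∧
      f z = S + ∑ n ∈ Finset.range m,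
        taylorLaurentE g z1 z2 m n * (z - z2) ^ n * (z - z1) ^ (-(n : ℤ) - 1) := by
  have hr0 : 0 < r := lt_of_le_of_lt (norm_nonneg _) hr
  have ha : z2 - z1 ≠ 0 := sub_ne_zero.2 h12.symm
  have ha' : z1 - z2 ≠ 0 := sub_ne_zero.2 h12
  obtain ⟨h, hh, hgh⟩ := tl_taylor Ω hΩ g hg z1 hz1 m
  have hfh : ∀ w, w - z1 ≠ 0 → f w = h w + ∑ k ∈ Finset.range m,
      iteratedDeriv k g z1 / (Nat.factorial k : ℂ) * tlG z1 z2 (m - k) 0 w := by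
    intro w hw
    rw [hfdef, hgh w, add_div, Finset.sum_div, add_comm]
    congr 1
    · field_simp
    · refine Finset.sum_congr rfl fun k hk => ?_
      obtain ⟨d, rfl⟩ := Nat.exists_eq_add_of_lt (Finset.mem_range.1 hk)
      have e : k + d + 1 - k = d + 1 := by omega
      rw [e, tlG]
      field_simp
      ring
  set U : Set ℂ := {w | ‖(w - z1) * (w - z2)‖ < r} with hUdef
  have hUm : ∀ w, w ∈ U ↔ ‖(w - z1) * (w - z2)‖ < r := fun w => Iff.rfl
  have hU : IsOpen U := isOpen_lt (by fun_prop) continuous_const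
  have hUΩ : U ⊆ Ω := by
    intro w hw
    by_contra hn
    have h1 := hrΩ w hn
    rw [hUm] at hw
    linarith
  have hU1 : z1 ∈ U := by rw [hUm]; simpa using hr0
  have hU2 : z2 ∈ U := by rw [hUm]; simpa using hr0
  obtain ⟨A, B, hA, hB, hAB⟩ := tl_decomp z1 z2 r h (hh.mono hUΩ)
  set α : ℕ → ℂ := fun j => iteratedDeriv j A 0 / (Nat.factorial j : ℂ) with hα
  set β : ℕ → ℂ := fun j => iteratedDeriv j B 0 / (Nat.factorial j : ℂ) with hβ
  set c : ℕ → ℂ := fun j => α j / (z2 - z1) + β j / 2 with hc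
  set c' : ℕ → ℂ := fun j => -α j / (z2 - z1) + β j / 2 with hc'
  have hlin : ∀ j w, α j + (w - (z1 + z2) / 2) * β j = c j * (w - z1) + c' j * (w - z2) := by
    intro j w
    simp only [hc, hc']
    field_simp
    ring
  obtain ⟨ε, hε, hεd, hε1, hε2⟩ : ∃ ε : ℝ, 0 < ε ∧ ε < ‖z1 - z2‖ ∧ Metric.closedBall z1 ε ⊆ U ∧
      Metric.closedBall z2 ε ⊆ U := by
    obtain ⟨e1, he1, hb1⟩ := Metric.nhds_basis_closedBall.mem_iff.1 (hU.mem_nhds hU1)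
    obtain ⟨e2, he2, hb2⟩ := Metric.nhds_basis_closedBall.mem_iff.1 (hU.mem_nhds hU2)
    have hp : 0 < ‖z1 - z2‖ := norm_pos_iff.2 ha'
    refine ⟨min (min e1 e2) (‖z1 - z2‖ / 2), by positivity,
      lt_of_le_of_lt (min_le_right _ _) (by linarith), ?_, ?_⟩
    · exact (Metric.closedBall_subset_closedBall ((min_le_left _ _).trans (min_le_left _ _))).trans hb1
    · exact (Metric.closedBall_subset_closedBall ((min_le_left _ _).trans (min_le_right _ _))).trans hb2
  have hεd' : ε < ‖z2 - z1‖ := by rwa [norm_sub_rev]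
  have hεU : Metric.closedBall z1 ε ∪ Metric.closedBall z2 ε ⊆ U := Set.union_subset hε1 hε2
  have hg1 : DifferentiableOn ℂ g (Metric.closedBall z1 ε) := hg.mono (hε1.trans hUΩ)
  have hf2 : DifferentiableOn ℂ f (Metric.closedBall z2 ε) := by
    have e : f = fun w => g w / (w - z1) ^ m := funext hfdef
    rw [e]
    refine (hg.mono (hε2.trans hUΩ)).div (by fun_prop) ?_
    intro w hw
    exact pow_ne_zero _ (tl_ne_ball hεd' hw)
  have hCfh : ∀ i j : ℕ, 1 ≤ i + j → tlC z1 z2 ε (fun w => f w * tlG z1 z2 i j w) =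
      tlC z1 z2 ε (fun w => h w * tlG z1 z2 i j w) := by
    intro i j hij
    have e : tlC z1 z2 ε (fun w => f w * tlG z1 z2 i j w) = tlC z1 z2 ε (fun w =>
        h w * tlG z1 z2 i j w + ∑ k ∈ Finset.range m,
          iteratedDeriv k g z1 / (Nat.factorial k : ℂ) * tlG z1 z2 (m - k + i) j w) := by
      refine tlC_congr hε fun w hw => ?_
      obtain ⟨h1, h2⟩ := tl_ne_of_mem hε hεd hw
      simp only [hfh w h1]
      rw [add_mul, Finset.sum_mul]
      congr 1
      refine Finset.sum_congr rfl fun k _ => ?_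
      simp only [tlG, pow_zero, mul_one, pow_add, mul_inv]
      ring
    have hsub : Metric.sphere z1 ε ∪ Metric.sphere z2 ε ⊆ Ω :=
      (Set.union_subset_union Metric.sphere_subset_closedBall Metric.sphere_subset_closedBall).trans
        (hεU.trans hUΩ)
    rw [e, tlC_add hε, tlC_sum hε, Finset.sum_eq_zero, add_zero]
    · intro k hk
      rw [Finset.mem_range] at hk
      rw [tlC_const_mul, tlC_G hε hεd (m - k + i + j - 2) _ _ (by omega), mul_zero]
    · intro k _
      exact tlG_mul_cont hε hεd _ _ _
    · exact (hh.continuousOn.mono hsub).mul (tlG_cont hε hεd _ _)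
    · exact continuousOn_finsetSum _ fun k _ => tlG_mul_cont hε hεd _ _ _
  have hexp : ∀ n : ℕ, ∃ T : ℂ → ℂ, DifferentiableOn ℂ T U ∧ ∀ w,
      h w = (∑ j ∈ Finset.range (n + 1), (c j * (w - z1) + c' j * (w - z2)) *
        ((w - z1) * (w - z2)) ^ j) + ((w - z1) * (w - z2)) ^ (n + 1) * T w := by
    intro n
    obtain ⟨RA, hRA, eA⟩ := tl_taylor (Metric.ball 0 r) Metric.isOpen_ball A hA 0 (Metric.mem_ball_self hr0) (n + 1)
    obtain ⟨RB, hRB, eB⟩ := tl_taylor (Metric.ball 0 r) Metric.isOpen_ball B hB 0 (Metric.mem_ball_self hr0) (n + 1)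
    have hmaps : Set.MapsTo (fun w : ℂ => (w - z1) * (w - z2)) U (Metric.ball 0 r) := by
      intro w hw
      rw [mem_ball_zero_iff]
      exact hw
    have hP : DifferentiableOn ℂ (fun w : ℂ => (w - z1) * (w - z2)) U := by fun_prop
    refine ⟨fun w => RA ((w - z1) * (w - z2)) + (w - (z1 + z2) / 2) * RB ((w - z1) * (w - z2)),
      (hRA.comp hP hmaps).add (DifferentiableOn.mul (by fun_prop) (hRB.comp hP hmaps)), ?_⟩
    intro w
    rw [hAB w, eA, eB]
    simp only [sub_zero, ← hlin]
    have e : ∑ j ∈ Finset.range (n + 1), (α j + (w - (z1 + z2) / 2) * β j) *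
        ((w - z1) * (w - z2)) ^ j = (∑ j ∈ Finset.range (n + 1), α j * ((w - z1) * (w - z2)) ^ j) +
        (w - (z1 + z2) / 2) * ∑ j ∈ Finset.range (n + 1), β j * ((w - z1) * (w - z2)) ^ j := by
      rw [Finset.mul_sum, ← Finset.sum_add_distrib]
      exact Finset.sum_congr rfl fun j _ => by ring
    rw [e]
    ring
  have h2pi : (2 * Real.pi * Complex.I : ℂ) ≠ 0 := Complex.two_pi_I_ne_zero
  have hD1 : ∀ n, taylorLaurentD1 g f z1 z2 m n = c n := by
    intro n
    obtain ⟨T, hT, hTe⟩ := hexp n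
    have e1 := tl_D1 hε hεd g f m hm hfdef hg1 hf2 n
    rw [hCfh _ _ (by omega), tl_extract hε hεd n c c' T h (hT.mono hεU) (fun w _ => hTe w)] at e1
    exact (mul_right_cancel₀ ha (mul_left_cancel₀ h2pi e1)).symm
  have hD2 : ∀ n, taylorLaurentD2 g f z1 z2 m n = c' n := by
    intro n
    obtain ⟨T, hT, hTe⟩ := hexp n
    have e1 := tl_D2 hε hεd g f m hfdef hg1 hf2 n
    rw [hCfh _ _ (by omega), tlC_swap, tlG_swap, tl_extract hε hεd' n c' c T h
      (by rw [Set.union_comm]; exact hT.mono hεU) (fun w _ => by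
        rw [hTe w, mul_comm (w - z2) (w - z1)]
        congr 1
        exact Finset.sum_congr rfl fun j _ => by rw [add_comm])] at e1
    exact (mul_right_cancel₀ ha' (mul_left_cancel₀ h2pi e1)).symm
  refine ⟨h z, ?_, ?_⟩
  · have hzb : (z - z1) * (z - z2) ∈ Metric.ball (0 : ℂ) r := by rw [mem_ball_zero_iff]; exact hr
    have sA := Complex.hasSum_taylorSeries_on_ball hA hzb
    have sB := Complex.hasSum_taylorSeries_on_ball hB hzb
    have s := sA.add (sB.mul_left (z - (z1 + z2) / 2))
    rw [← hAB z] at s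
    refine s.tendsto_sum_nat.congr fun N => ?_
    refine Finset.sum_congr rfl fun n _ => ?_
    rw [hD1, hD2, ← hlin]
    simp only [hα, hβ, smul_eq_mul, sub_zero]
    ring
  · rw [tl_E g z1 z2 z h12 hzz1 m]
    exact hfh z (sub_ne_zero.2 hzz1)
end
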